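/- arXiv:2502.07952 — 17 statements merged into one kernel-verified Lean document; each statement's English description precedes it below -/
import Mathlib

section
/- For all costs c, c' with 0 ≤ c < c' < 1, the unique maximizers over [0,1] of p ↦ (p − c)·q(p) and p ↦ (p − c')·q(p) satisfy p*(c) < p*(c'); that is, the optimal selling price is strictly increasing in the cost. -/
noncomputable section

/-!
Adding the two optimality inequalities gives `(c' - c) * (q pstar - q pstar') ≥ 0`, hence
`pstar ≤ pstar'` since `q` is strictly decreasing. If the two prices coincided, the common price `p`
would be interior, so both first-order conditions `q p + (p - c) q'(p) = 0` and
`q p + (p - c') q'(p) = 0` would hold; subtracting them forces `q'(p) = 0` and then `q p = 0`,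
contradicting `p < 1`.
-/

theorem first_order_condition {q : ℝ → ℝ} (hq : Differentiable ℝ q) {c p : ℝ}
    (hp : p ∈ Set.Ioo (0:ℝ) 1)
    (hmax : IsMaxOn (fun p => (p - c) * q p) (Set.Icc (0:ℝ) 1) p) :
    q p + (p - c) * deriv q p = 0 := by
  have hloc := hmax.isLocalMax (Icc_mem_nhds hp.1 hp.2)
  have hd : HasDerivAt (fun p => (p - c) * q p) (1 * q p + (p - c) * deriv q p) p :=
    ((hasDerivAt_id p).sub_const c).mul (hq p).hasDerivAt
  have := hloc.hasDerivAt_eq_zero hd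
  linarith

theorem stmt_1
    (q : ℝ → ℝ)
    (hq_diff : Differentiable ℝ q)
    (hq_diff2 : Differentiable ℝ (deriv q))
    (hq_conc : StrictConcaveOn ℝ (Set.Icc (0:ℝ) 1) q)
    (hq_anti : StrictAntiOn q (Set.Icc (0:ℝ) 1))
    (hq_nonneg : ∀ p ∈ Set.Icc (0:ℝ) 1, 0 ≤ q p)
    (hq_zero : q 0 = 1) (hq_one : q 1 = 0)
    (c c' : ℝ) (hc0 : 0 ≤ c) (hcc' : c < c') (hc'1 : c' < 1)
    (pstar : ℝ) (hp_mem : pstar ∈ Set.Icc (0:ℝ) 1)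
    (hp_max : IsMaxOn (fun p => (p - c) * q p) (Set.Icc (0:ℝ) 1) pstar)
    (hp_uniq : ∀ p ∈ Set.Icc (0:ℝ) 1,
      IsMaxOn (fun p => (p - c) * q p) (Set.Icc (0:ℝ) 1) p → p = pstar)
    (pstar' : ℝ) (hp'_mem : pstar' ∈ Set.Icc (0:ℝ) 1)
    (hp'_max : IsMaxOn (fun p => (p - c') * q p) (Set.Icc (0:ℝ) 1) pstar')
    (hp'_uniq : ∀ p ∈ Set.Icc (0:ℝ) 1,
      IsMaxOn (fun p => (p - c') * q p) (Set.Icc (0:ℝ) 1) p → p = pstar') :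
    pstar < pstar' := by
  have hle : pstar ≤ pstar' := by
    have h1 : (pstar' - c) * q pstar' ≤ (pstar - c) * q pstar := hp_max hp'_mem
    have h2 : (pstar - c') * q pstar ≤ (pstar' - c') * q pstar' := hp'_max hp_mem
    by_contra! h
    have h3 := hq_anti hp'_mem hp_mem h
    nlinarith
  refine lt_of_le_of_ne hle fun heq => ?_
  subst heq
  have hone : (1:ℝ) ∈ Set.Icc (0:ℝ) 1 := ⟨zero_le_one, le_rfl⟩
  -- The price midway between `c'` and `1` is feasible and earns a positive profit.
  have hmid : ((c' + 1) / 2) ∈ Set.Icc (0:ℝ) 1 := ⟨by linarith, by linarith⟩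
  have hqmid : 0 < q ((c' + 1) / 2) := hq_one ▸ hq_anti hmid hone (by linarith)
  have hpos : 0 < (pstar - c') * q pstar :=
    lt_of_lt_of_le (mul_pos (by linarith) hqmid) (hp'_max hmid)
  have h1 : pstar < 1 := by
    refine lt_of_le_of_ne hp_mem.2 fun h => ?_
    rw [h, hq_one] at hpos
    simp at hpos
  have h0 : 0 < pstar := by
    refine lt_of_le_of_ne hp_mem.1 fun h => ?_
    rw [← h, hq_zero] at hpos
    linarith
  have hqp : 0 < q pstar := hq_one ▸ hq_anti hp_mem hone h1
  have e := first_order_condition hq_diff ⟨h0, h1⟩ hp_max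
  have e' := first_order_condition hq_diff ⟨h0, h1⟩ hp'_max
  have hd : deriv q pstar = 0 := by
    have : (c' - c) * deriv q pstar = 0 := by linarith
    exact (mul_eq_zero.mp this).resolve_left (by linarith)
  rw [hd] at e
  linarith
end
end

section
/- In the staying subgame with tie-splitting parameter β ∈ (0,1), no strategy profile in which both players choose the same price p ∈ (0,1] is a Nash equilibrium. Equivalently, if a shared-price profile (p, p) is a Nash equilibrium for some β ∈ [0,1], then β ∈ {0, 1}. -/
/-! Suppose `0 < β < 1` and both players charge `p`. Since `q 1 = 0`, a tie at `p = 1` pays the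
retailer nothing, while a price strictly between `c_r` and `1` pays a positive amount; so `p < 1`
and `q p > 0`. The retailer can always give up the sale by charging `1`, which earns the fee
`α p q(p)`; as `β > 0`, that this is unprofitable forces `α p ≤ p - c_r`. Hence
`(1 - α) p ≥ c_r > c_s`: the seller's margin at `p` is positive. By continuity of `q`, a slight
undercut then gives the seller almost `((1 - α) p - c_s) q(p)`, which exceeds its share
`1 - β < 1` of that amount. -/

noncomputable section

/-- The retailer's payoff in the staying subgame, given prices `pr`, `ps` and
tie-splitting parameter `β`. -/
noncomputable def retPay (q : ℝ → ℝ) (cr α β : ℝ) (pr ps : ℝ) : ℝ :=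
  if pr < ps then (pr - cr) * q pr
  else if pr = ps then β * ((pr - cr) * q pr) + (1 - β) * (α * pr * q pr)
  else α * ps * q ps

/-- The independent seller's payoff in the staying subgame. -/
noncomputable def selPay (q : ℝ → ℝ) (cs α β : ℝ) (pr ps : ℝ) : ℝ :=
  if ps < pr then ((1 - α) * ps - cs) * q ps
  else if ps = pr then (1 - β) * (((1 - α) * ps - cs) * q ps)
  else 0

/-- `(pr, ps)` is a Nash equilibrium of the staying subgame: both prices lie in `(0,1]`
and neither player can strictly increase its own payoff by unilaterally deviating. -/
def IsNash (q : ℝ → ℝ) (cr cs α β : ℝ) (pr ps : ℝ) : Prop :=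
  pr ∈ Set.Ioc (0:ℝ) 1 ∧ ps ∈ Set.Ioc (0:ℝ) 1 ∧
  (∀ pr' ∈ Set.Ioc (0:ℝ) 1, retPay q cr α β pr' ps ≤ retPay q cr α β pr ps) ∧
  (∀ ps' ∈ Set.Ioc (0:ℝ) 1, selPay q cs α β pr ps' ≤ selPay q cs α β pr ps)

theorem stmt_4
    (q : ℝ → ℝ)
    (hq_diff : Differentiable ℝ q)
    (hq_diff2 : Differentiable ℝ (deriv q))
    (hq_conc : StrictConcaveOn ℝ (Set.Icc (0:ℝ) 1) q)
    (hq_anti : StrictAntiOn q (Set.Icc (0:ℝ) 1))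
    (hq_nonneg : ∀ p ∈ Set.Icc (0:ℝ) 1, 0 ≤ q p)
    (hq_zero : q 0 = 1) (hq_one : q 1 = 0)
    (cr cs α : ℝ) (hcs0 : 0 < cs) (hcsr : cs < cr) (hcr1 : cr < 1)
    (hα : α ∈ Set.Ioo (0:ℝ) 1)
    (β : ℝ) (hβ : β ∈ Set.Icc (0:ℝ) 1)
    (p : ℝ) (hp : p ∈ Set.Ioc (0:ℝ) 1)
    (hnash : IsNash q cr cs α β p p) :
    β = 0 ∨ β = 1 := by
  obtain ⟨-, -, hR, hS⟩ := hnash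
  obtain ⟨hp0, hp1⟩ := hp
  by_contra! hne
  have hβ0 : 0 < β := lt_of_le_of_ne hβ.1 (Ne.symm hne.1)
  have hpos : ∀ x, 0 ≤ x → x < 1 → 0 < q x := fun x hx0 hx1 => by
    have := hq_anti ⟨hx0, hx1.le⟩ ⟨zero_le_one, le_rfl⟩ hx1
    linarith
  rcases hp1.eq_or_lt with rfl | hp1
  · have h := hR ((cr + 1) / 2) ⟨by linarith, by linarith⟩
    have hlt : (cr + 1) / 2 < 1 := by linarith
    simp only [retPay, if_pos hlt, lt_irrefl, if_false, if_true, hq_one, mul_zero, add_zero] at h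
    have : 0 < ((cr + 1) / 2 - cr) * q ((cr + 1) / 2) :=
      mul_pos (by linarith) (hpos _ (by linarith) hlt)
    linarith
  have hq := hpos p hp0.le hp1
  have hfee : α * p ≤ p - cr := by
    have h := hR 1 ⟨one_pos, le_rfl⟩
    simp only [retPay, if_neg hp1.not_gt, if_neg hp1.ne', lt_irrefl, if_false, if_true] at h
    have h' : 0 ≤ (β * q p) * (p - cr - α * p) := by linarith
    have := nonneg_of_mul_nonneg_right h' (mul_pos hβ0 hq)
    linarith
  have hmargin : 0 < ((1 - α) * p - cs) * q p := mul_pos (by linarith) hq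
  have hcont : Continuous fun x => ((1 - α) * x - cs) * q x := by
    have := hq_diff.continuous
    fun_prop
  have hlim : ((1 - α) * p - cs) * q p ≤ (1 - β) * (((1 - α) * p - cs) * q p) := by
    refine le_of_tendsto ((hcont.tendsto p).mono_left (nhdsWithin_le_nhds (s := Set.Iio p))) ?_
    filter_upwards [Ioo_mem_nhdsLT hp0] with x hx
    have h := hS x ⟨hx.1, (hx.2.trans hp1).le⟩
    simpa only [selPay, if_pos hx.2, lt_irrefl, if_false, if_true] using h
  linarith [mul_pos hβ0 hmargin]
end
end

section
/- Suppose the retailer's cost satisfies c_r ≥ 1 (while 0 < c_s < 1, α ∈ (0,1), and α < 1 − c_s). Then in the staying subgame, for any tie-splitting parameter β ∈ [0,1]: (a) the retailer's price 1 weakly dominates every retailer price p_r ∈ (0,1), i.e., against every seller price the retailer's payoff at price 1 is at least its payoff at price p_r, with strict inequality against some seller price; and (b) the profile (p_r, p_s) = (1, p_s*) is a Nash equilibrium, where p_s* is the unique maximizer of π_ss over [0,1]. -/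
/-!
Since `q 1 = 0`, a retailer charging 1 receives `α * ps * q ps ≥ 0` whatever the seller's price.
At a lower price it either receives the same fee (`pr > ps`) or makes sales itself, at margin
`pr - cr ≤ 0`, in place of some or all of the fee income; against `ps = 1` the loss is strict
because `q pr > 0` for `pr < 1`. Facing a retailer price of 1, the seller's payoff is `π_ss` on all
of `(0,1]`, so its maximizer is a best response. This maximizer is not 0, because
`π_ss 0 = -cs < 0 = π_ss 1`.
-/

noncomputable section

/-- A price of 1 sells nothing (`q 1 = 0`), so a retailer charging 1 earns exactly the
referral fee on the seller's sales; the tie at `ps = 1` agrees with this since both sides vanish. -/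
lemma retPay_one {q : ℝ → ℝ} (hq_one : q 1 = 0) (cr α β : ℝ) {ps : ℝ} (hps : ps ≤ 1) :
    retPay q cr α β 1 ps = α * ps * q ps := by
  rcases hps.lt_or_eq with h | rfl
  · simp [retPay, h.not_gt, h.ne']
  · simp [retPay, hq_one]

/-- Against a retailer price of 1, the seller is an unconstrained monopolist on `(0,1]`. -/
lemma selPay_one {q : ℝ → ℝ} (hq_one : q 1 = 0) (cs α β : ℝ) {ps : ℝ} (hps : ps ≤ 1) :
    selPay q cs α β 1 ps = ((1 - α) * ps - cs) * q ps := by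
  rcases hps.lt_or_eq with h | rfl
  · simp [selPay, h]
  · simp [selPay, hq_one]

/-- A retailer with cost at least 1 never gains by making sales itself at a price in `(0,1]`. -/
lemma retPay_le_one {q : ℝ → ℝ} (hq_nonneg : ∀ p ∈ Set.Icc (0:ℝ) 1, 0 ≤ q p) (hq_one : q 1 = 0)
    {cr α β : ℝ} (hcr : 1 ≤ cr) (hα : 0 < α) (hβ : 0 ≤ β)
    {pr ps : ℝ} (hpr : pr ∈ Set.Ioc (0:ℝ) 1) (hps : ps ∈ Set.Ioc (0:ℝ) 1) :
    retPay q cr α β pr ps ≤ retPay q cr α β 1 ps := by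
  rw [retPay_one hq_one cr α β hps.2]
  have hqr := hq_nonneg pr ⟨hpr.1.le, hpr.2⟩
  have hqs := hq_nonneg ps ⟨hps.1.le, hps.2⟩
  have hown : (pr - cr) * q pr ≤ 0 :=
    mul_nonpos_of_nonpos_of_nonneg (by linarith [hpr.2]) hqr
  have hfee : 0 ≤ α * ps * q ps := mul_nonneg (mul_nonneg hα.le hps.1.le) hqs
  unfold retPay
  split_ifs with h1 h2
  · exact hown.trans hfee
  · subst h2
    nlinarith [mul_nonneg hβ (sub_nonneg.2 (hown.trans hfee))]
  · exact le_rfl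

theorem stmt_5
    (q : ℝ → ℝ)
    (hq_diff : Differentiable ℝ q)
    (hq_diff2 : Differentiable ℝ (deriv q))
    (hq_conc : StrictConcaveOn ℝ (Set.Icc (0:ℝ) 1) q)
    (hq_anti : StrictAntiOn q (Set.Icc (0:ℝ) 1))
    (hq_nonneg : ∀ p ∈ Set.Icc (0:ℝ) 1, 0 ≤ q p)
    (hq_zero : q 0 = 1) (hq_one : q 1 = 0)
    (cr cs α : ℝ) (hcs0 : 0 < cs) (hcs1 : cs < 1) (hcr : 1 ≤ cr)
    (hα : α ∈ Set.Ioo (0:ℝ) 1) (hαcs : α < 1 - cs)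
    (β : ℝ) (hβ : β ∈ Set.Icc (0:ℝ) 1)
    (psstar : ℝ) (hps_mem : psstar ∈ Set.Icc (0:ℝ) 1)
    (hps_max : IsMaxOn (fun p => ((1 - α) * p - cs) * q p) (Set.Icc (0:ℝ) 1) psstar)
    (hps_uniq : ∀ p ∈ Set.Icc (0:ℝ) 1,
      IsMaxOn (fun p => ((1 - α) * p - cs) * q p) (Set.Icc (0:ℝ) 1) p → p = psstar) :
    (∀ pr ∈ Set.Ioo (0:ℝ) 1,
      (∀ ps ∈ Set.Ioc (0:ℝ) 1, retPay q cr α β pr ps ≤ retPay q cr α β 1 ps) ∧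
      (∃ ps ∈ Set.Ioc (0:ℝ) 1, retPay q cr α β pr ps < retPay q cr α β 1 ps)) ∧
    IsNash q cr cs α β 1 psstar := by
  have hβ0 := hβ.1
  have hα0 := hα.1
  have one_mem : (1:ℝ) ∈ Set.Ioc (0:ℝ) 1 := ⟨one_pos, le_rfl⟩
  have hpos : 0 < psstar := by
    refine hps_mem.1.lt_of_ne fun h => ?_
    have h1 : ((1 - α) * 1 - cs) * q 1 ≤ ((1 - α) * psstar - cs) * q psstar :=
      hps_max ⟨zero_le_one, le_rfl⟩
    rw [← h, hq_one, hq_zero] at h1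
    linarith
  refine ⟨fun pr hpr => ⟨fun ps hps =>
      retPay_le_one hq_nonneg hq_one hcr hα0 hβ0 ⟨hpr.1, hpr.2.le⟩ hps, 1, one_mem, ?_⟩,
    one_mem, ⟨hpos, hps_mem.2⟩, fun pr hpr =>
      retPay_le_one hq_nonneg hq_one hcr hα0 hβ0 hpr ⟨hpos, hps_mem.2⟩, fun ps hps => ?_⟩
  · have hq : 0 < q pr :=
      hq_one ▸ hq_anti ⟨hpr.1.le, hpr.2.le⟩ ⟨zero_le_one, le_rfl⟩ hpr.2
    rw [retPay_one hq_one cr α β le_rfl, hq_one, mul_zero, retPay, if_pos hpr.2]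
    exact mul_neg_of_neg_of_pos (by linarith [hpr.2]) hq
  · rw [selPay_one hq_one cs α β hps.2, selPay_one hq_one cs α β hps_mem.2]
    exact hps_max ⟨hps.1.le, hps.2⟩
end
end

section
/- Suppose the costs are reversed: 0 < c_r < c_s < 1 (retailer's cost strictly below the seller's), with α ∈ (0,1) and tie-splitting parameter β = 0. Then the staying subgame has no Nash equilibrium (p_r, p_s) with p_s ≤ p_r, i.e., there is no Nash equilibrium in which the independent seller fulfills demand. -/
/-!
If the seller fulfills demand at a price `ps < 1`, the retailer earns the fee `α * ps * q ps`, but by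
pricing just below `ps` it can earn amounts arbitrarily close to `(ps - cr) * q ps`. Equilibrium
therefore forces `(1 - α) * ps ≤ cr < cs`, so the seller sells at a loss and does strictly better
by pricing at `1`, where its payoff is `0`. If `ps = 1`, demand vanishes and the retailer gains by
undercutting to any price strictly between `cr` and `1`.
-/


noncomputable section

theorem stmt_6
    (q : ℝ → ℝ)
    (hq_diff : Differentiable ℝ q)
    (hq_diff2 : Differentiable ℝ (deriv q))
    (hq_conc : StrictConcaveOn ℝ (Set.Icc (0:ℝ) 1) q)
    (hq_anti : StrictAntiOn q (Set.Icc (0:ℝ) 1))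
    (hq_nonneg : ∀ p ∈ Set.Icc (0:ℝ) 1, 0 ≤ q p)
    (hq_zero : q 0 = 1) (hq_one : q 1 = 0)
    (cr cs α : ℝ) (hcr0 : 0 < cr) (hcrs : cr < cs) (hcs1 : cs < 1)
    (hα : α ∈ Set.Ioo (0:ℝ) 1) :
    ¬ ∃ pr ps : ℝ, IsNash q cr cs α 0 pr ps ∧ ps ≤ pr := by
  rintro ⟨pr, ps, ⟨⟨hr0, hr1⟩, ⟨hs0, hs1⟩, hR, hS⟩, hle⟩
  have hpay : retPay q cr α 0 pr ps = α * ps * q ps := by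
    rcases hle.lt_or_eq with h | rfl
    · simp [retPay, not_lt.2 h.le, h.ne']
    · simp [retPay]
  have hunder : ∀ p ∈ Set.Ioo 0 ps, (p - cr) * q p ≤ α * ps * q ps := by
    rintro p ⟨h0, h1⟩
    have h := hR p ⟨h0, h1.le.trans hs1⟩
    rwa [hpay, retPay, if_pos h1] at h
  have hpos : ∀ p, 0 ≤ p → p < 1 → 0 < q p := fun p h0 h1 => by
    have := hq_anti ⟨h0, h1.le⟩ ⟨zero_le_one, le_rfl⟩ h1
    rwa [hq_one] at this
  rcases hs1.lt_or_eq with hs1 | rfl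
  · have hq := hpos ps hs0.le hs1
    have hlim : (ps - cr) * q ps ≤ α * ps * q ps := by
      have hc : Continuous fun p => (p - cr) * q p :=
        (continuous_id.sub continuous_const).mul hq_diff.continuous
      refine le_of_tendsto ((hc.tendsto ps).mono_left
        (nhdsWithin_le_nhds (s := Set.Iio ps))) ?_
      filter_upwards [Ioo_mem_nhdsLT hs0] with p hp using hunder p hp
    have hmargin : ps - cr ≤ α * ps := le_of_mul_le_mul_right hlim hq
    -- Pricing at 1 yields the seller exactly 0, whether or not it makes the sale.
    have hdev : selPay q cs α 0 pr 1 = 0 := by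
      simp [selPay, not_lt.2 hr1, hq_one]
    have hsel : selPay q cs α 0 pr ps = ((1 - α) * ps - cs) * q ps := by
      rcases hle.lt_or_eq with h | rfl
      · simp [selPay, h]
      · simp [selPay]
    have h := hS 1 ⟨zero_lt_one, le_rfl⟩
    rw [hdev, hsel] at h
    have : ((1 - α) * ps - cs) * q ps < 0 := mul_neg_of_neg_of_pos (by linarith) hq
    linarith
  · have h := hunder ((1 + cr) / 2) ⟨by linarith, by linarith⟩
    rw [hq_one, mul_zero] at h
    have : 0 < ((1 + cr) / 2 - cr) * q ((1 + cr) / 2) :=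
      mul_pos (by linarith) (hpos _ (by linarith) (by linarith))
    linarith
end
end

section
/- In the staying subgame with tie-splitting parameter β = 1 (ties are served entirely by the retailer), there is no price p ∈ (0,1] such that the shared-price profile (p_r, p_s) = (p, p) is a Nash equilibrium; that is, there are no shared-price equilibria in which the retailer fulfills demand. -/
/-!
If the retailer serves all demand at a shared price `p < 1`, it must not prefer to price at `1` and
collect the referral fee on the seller's sale at `p`. Since `q p > 0`, this forces
`(1 - α) * p ≥ cr > cs`. The seller, who earns nothing at the tie, can then undercut to a price
strictly between `cs / (1 - α)` and `p` and earn a positive profit. If `p = 1`, demand vanishes and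
the retailer gains by pricing strictly between `cr` and `1`.
-/

noncomputable section

theorem stmt_7
    (q : ℝ → ℝ)
    (hq_diff : Differentiable ℝ q)
    (hq_diff2 : Differentiable ℝ (deriv q))
    (hq_conc : StrictConcaveOn ℝ (Set.Icc (0:ℝ) 1) q)
    (hq_anti : StrictAntiOn q (Set.Icc (0:ℝ) 1))
    (hq_nonneg : ∀ p ∈ Set.Icc (0:ℝ) 1, 0 ≤ q p)
    (hq_zero : q 0 = 1) (hq_one : q 1 = 0)
    (cr cs α : ℝ) (hcs0 : 0 < cs) (hcsr : cs < cr) (hcr1 : cr < 1)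
    (hα : α ∈ Set.Ioo (0:ℝ) 1) :
    ¬ ∃ p ∈ Set.Ioc (0:ℝ) 1, IsNash q cr cs α 1 p p := by
  rintro ⟨p, ⟨hp0, hp1⟩, -, -, hr, hs⟩
  obtain ⟨hα0, hα1⟩ := hα
  have qpos : ∀ x, 0 < x → x < 1 → 0 < q x := fun x h0 h1 => by
    simpa [hq_one] using hq_anti ⟨h0.le, h1.le⟩ ⟨zero_le_one, le_rfl⟩ h1
  rcases hp1.lt_or_eq with hlt | rfl
  · have hqp := qpos p hp0 hlt
    have h1 := hr 1 ⟨one_pos, le_rfl⟩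
    simp only [retPay, hlt.not_gt, hlt.ne', lt_irrefl, if_false, if_true, sub_self, zero_mul,
      add_zero, one_mul] at h1
    have h2 : α * p ≤ p - cr := le_of_mul_le_mul_right h1 hqp
    have ha : 0 < 1 - α := sub_pos.2 hα1
    have h3 : cs / (1 - α) < p := by rw [div_lt_iff₀ ha]; linarith
    obtain ⟨x, hx1, hx2⟩ := exists_between h3
    have hx0 : 0 < x := (div_pos hcs0 ha).trans hx1
    have h4 := hs x ⟨hx0, (hx2.trans hlt).le⟩
    simp only [selPay, hx2, lt_irrefl, if_false, if_true, sub_self, zero_mul] at h4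
    rw [div_lt_iff₀ ha] at hx1
    have h5 : 0 < (1 - α) * x - cs := by linarith
    exact h4.not_gt (mul_pos h5 (qpos x hx0 (hx2.trans hlt)))
  · obtain ⟨x, hx1, hx2⟩ := exists_between hcr1
    have hx0 : 0 < x := (hcs0.trans hcsr).trans hx1
    have h := hr x ⟨hx0, hx2.le⟩
    simp only [retPay, hx2, lt_irrefl, if_false, if_true, hq_one, mul_zero, add_zero] at h
    exact h.not_gt (mul_pos (sub_pos.2 hx1) (qpos x hx0 hx2))
end
end

section
/- Assume α < 1 − c_s and tie-splitting parameter β = 0 (ties are served entirely by the seller). Then a shared-price profile (p, p) with p ∈ (0,1] is a Nash equilibrium of the staying subgame if and only if p_sind ≤ p ≤ p_s* and sup{π_rr(p') : p' ∈ (0, p)} ≤ α·p·q(p), where p_s* is the unique maximizer of π_ss over [0,1] and p_sind = c_s/(1−α). -/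
/-!
With `β = 0`, matching the seller's price `p` already gives the retailer the referral payoff
`α * p * q p`, and overpricing gives exactly the same. So the retailer's condition is that no
undercut `p' < p` does better, which is the supremum condition.

The seller can be undercut-proof only if `p` is at least the indifference price (otherwise pricing
above `p` and earning `0` is better) and at most `psstar` (otherwise `psstar` itself is an
undercut at least as good as `p`, contradicting uniqueness of the maximizer). Conversely, the
seller's margin is affine and increasing and `q` is concave and decreasing, so their product is
quasiconcave where both are nonnegative (`mul_ge_of_between`); it therefore increases up to
`psstar`, and undercuts of `p ≤ psstar` do not pay.
-/

noncomputable section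

/-- The quasiconcavity inequality: for an affine margin with values `f₁ ≤ f₂` at the endpoints and a
concave demand, at least `t * q₁ + (1 - t) * q₂` at the intermediate point, the profit there is at
least the left-hand profit `f₁ * q₁`, provided the right-hand one is. The opposite monotonicity of
margin and demand gives `f₁ * q₂ + f₂ * q₁ ≥ f₁ * q₁ + f₂ * q₂`. -/
lemma mul_ge_of_between {f₁ f₂ q₁ q₂ t y : ℝ} (hf₁ : 0 ≤ f₁) (hf : f₁ ≤ f₂) (hq : q₂ ≤ q₁)
    (ht0 : 0 ≤ t) (ht1 : t ≤ 1) (h : f₁ * q₁ ≤ f₂ * q₂) (hy : t * q₁ + (1 - t) * q₂ ≤ y) :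
    f₁ * q₁ ≤ (t * f₁ + (1 - t) * f₂) * y := by
  have hs : 0 ≤ 1 - t := by linarith
  have hm : 0 ≤ t * f₁ + (1 - t) * f₂ :=
    add_nonneg (mul_nonneg ht0 hf₁) (mul_nonneg hs (hf₁.trans hf))
  have h1 := mul_le_mul_of_nonneg_left hy hm
  have h2 : 0 ≤ t * (1 - t) * ((f₂ - f₁) * (q₁ - q₂)) :=
    mul_nonneg (mul_nonneg ht0 hs) (mul_nonneg (by linarith) (by linarith))
  have h3 : 0 ≤ (1 - t) * (f₂ * q₂ - f₁ * q₁) := mul_nonneg hs (by linarith)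
  linear_combination h1 + h2 + h3

/-- With `β = 0`, the equilibrium conditions at `(p, p)` reduce to: no undercut helps the retailer,
no undercut helps the seller, and the seller does not prefer to sell nothing (relevant only when a
higher price is available, i.e. `p < 1`). -/
lemma isNash_tie_iff (q : ℝ → ℝ) (cr cs α p : ℝ) (hp : p ∈ Set.Ioc (0:ℝ) 1) :
    IsNash q cr cs α 0 p p ↔
      (∀ x ∈ Set.Ioo (0:ℝ) p, (x - cr) * q x ≤ α * p * q p) ∧
      (∀ x ∈ Set.Ioo (0:ℝ) p, ((1 - α) * x - cs) * q x ≤ ((1 - α) * p - cs) * q p) ∧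
      (p < 1 → 0 ≤ ((1 - α) * p - cs) * q p) := by
  have hr : retPay q cr α 0 p p = α * p * q p := by simp [retPay]
  have hs : selPay q cs α 0 p p = ((1 - α) * p - cs) * q p := by simp [selPay]
  simp only [IsNash, hr, hs]
  constructor
  · rintro ⟨-, -, h1, h2⟩
    refine ⟨fun x hx => ?_, fun x hx => ?_, fun hp1 => ?_⟩
    · simpa [retPay, hx.2] using h1 x ⟨hx.1, hx.2.le.trans hp.2⟩
    · simpa [selPay, hx.2] using h2 x ⟨hx.1, hx.2.le.trans hp.2⟩
    · simpa [selPay, hp1.not_gt, hp1.ne'] using h2 1 ⟨one_pos, le_rfl⟩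
  · rintro ⟨h1, h2, h3⟩
    refine ⟨hp, hp, fun x hx => ?_, fun x hx => ?_⟩
    · rcases lt_trichotomy x p with h | rfl | h
      · simpa [retPay, h] using h1 x ⟨hx.1, h⟩
      · exact hr.le
      · simp [retPay, h.not_gt, h.ne']
    · rcases lt_trichotomy x p with h | rfl | h
      · simpa [selPay, h] using h2 x ⟨hx.1, h⟩
      · exact hs.le
      · simpa [selPay, h.not_gt, h.ne'] using h3 (h.trans_le hx.2)

theorem stmt_8
    (q : ℝ → ℝ)
    (hq_diff : Differentiable ℝ q)
    (hq_diff2 : Differentiable ℝ (deriv q))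
    (hq_conc : StrictConcaveOn ℝ (Set.Icc (0:ℝ) 1) q)
    (hq_anti : StrictAntiOn q (Set.Icc (0:ℝ) 1))
    (hq_nonneg : ∀ p ∈ Set.Icc (0:ℝ) 1, 0 ≤ q p)
    (hq_zero : q 0 = 1) (hq_one : q 1 = 0)
    (cr cs α : ℝ) (hcs0 : 0 < cs) (hcsr : cs < cr) (hcr1 : cr < 1)
    (hα : α ∈ Set.Ioo (0:ℝ) 1)
    (hαcs : α < 1 - cs)
    (psstar : ℝ) (hps_mem : psstar ∈ Set.Icc (0:ℝ) 1)
    (hps_max : IsMaxOn (fun p => ((1 - α) * p - cs) * q p) (Set.Icc (0:ℝ) 1) psstar)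
    (hps_uniq : ∀ p ∈ Set.Icc (0:ℝ) 1,
      IsMaxOn (fun p => ((1 - α) * p - cs) * q p) (Set.Icc (0:ℝ) 1) p → p = psstar)
    (p : ℝ) (hp : p ∈ Set.Ioc (0:ℝ) 1) :
    IsNash q cr cs α 0 p p ↔
      cs / (1 - α) ≤ p ∧ p ≤ psstar ∧
      sSup ((fun p' => (p' - cr) * q p') '' Set.Ioo (0:ℝ) p) ≤ α * p * q p := by
  have hα1 : 0 < 1 - α := by linarith [hα.2]
  have hpI : p ∈ Set.Icc (0:ℝ) 1 := ⟨hp.1.le, hp.2⟩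
  have hmax : ∀ x ∈ Set.Icc (0:ℝ) 1,
      ((1 - α) * x - cs) * q x ≤ ((1 - α) * psstar - cs) * q psstar := fun x hx => hps_max hx
  have hsup : sSup ((fun p' => (p' - cr) * q p') '' Set.Ioo (0:ℝ) p) ≤ α * p * q p ↔
      ∀ x ∈ Set.Ioo (0:ℝ) p, (x - cr) * q x ≤ α * p * q p := by
    rw [csSup_le_iff _ ((Set.nonempty_Ioo.2 hp.1).image _), Set.forall_mem_image]
    -- On `(0, p)` both the margin and the demand are at most `1`.
    refine ⟨1, Set.forall_mem_image.2 fun x hx => ?_⟩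
    have hxI : x ∈ Set.Icc (0:ℝ) 1 := ⟨hx.1.le, hx.2.le.trans hp.2⟩
    have hq1 : q x ≤ 1 :=
      hq_zero ▸ hq_anti.antitoneOn ⟨le_rfl, zero_le_one⟩ hxI hx.1.le
    nlinarith [hq_nonneg x hxI, hxI.2]
  rw [isNash_tie_iff q cr cs α p hp, hsup]
  constructor
  · rintro ⟨h1, h2, h3⟩
    refine ⟨?_, ?_, h1⟩
    · rw [div_le_iff₀ hα1]
      rcases hp.2.lt_or_eq with hlt | rfl
      · have hqp : 0 < q p := hq_one ▸ hq_anti hpI ⟨zero_le_one, le_rfl⟩ hlt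
        linarith [nonneg_of_mul_nonneg_left (h3 hlt) hqp]
      · linarith
    · by_contra! hlt
      -- Price `0` yields `-cs < 0`, the profit at price `1`, so it is not the maximizer.
      have hpos : 0 < psstar := by
        refine hps_mem.1.lt_of_ne fun h0 => ?_
        have := hmax 1 ⟨zero_le_one, le_rfl⟩
        rw [← h0, hq_zero, hq_one] at this
        linarith
      exact hlt.ne' <| hps_uniq p hpI fun x hx => (hmax x hx).trans (h2 psstar ⟨hpos, hlt⟩)
  · rintro ⟨h1, h2, h3⟩
    rw [div_le_iff₀ hα1] at h1
    have hprofit : 0 ≤ ((1 - α) * p - cs) * q p :=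
      mul_nonneg (by linarith) (hq_nonneg p hpI)
    refine ⟨h3, fun x hx => ?_, fun _ => hprofit⟩
    have hxI : x ∈ Set.Icc (0:ℝ) 1 := ⟨hx.1.le, hx.2.le.trans hp.2⟩
    rcases le_total ((1 - α) * x - cs) 0 with hf | hf
    · exact (mul_nonpos_of_nonpos_of_nonneg hf (hq_nonneg x hxI)).trans hprofit
    · have hxs : x < psstar := hx.2.trans_le h2
      have hd : 0 < psstar - x := by linarith
      -- `p = t * x + (1 - t) * psstar`.
      obtain ⟨t, ht⟩ : ∃ t, t = (psstar - p) / (psstar - x) := ⟨_, rfl⟩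
      have ht0 : 0 ≤ t := ht ▸ div_nonneg (by linarith) hd.le
      have ht1 : t ≤ 1 := ht ▸ (div_le_one hd).2 (by linarith [hx.2])
      have htp : t * x + (1 - t) * psstar = p := by
        rw [ht]; field_simp; ring
      have hconc := hq_conc.concaveOn.2 hxI hps_mem ht0 (sub_nonneg.2 ht1) (by ring)
      simp only [smul_eq_mul, htp] at hconc
      have key := mul_ge_of_between (f₂ := (1 - α) * psstar - cs) hf
        (by linarith [mul_lt_mul_of_pos_left hxs hα1])
        (hq_anti.antitoneOn hxI hps_mem hxs.le) ht0 ht1 (hmax x hxI) hconc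
      have hfp : t * ((1 - α) * x - cs) + (1 - t) * ((1 - α) * psstar - cs)
          = (1 - α) * p - cs := by linear_combination (1 - α) * htp
      rwa [hfp] at key
end
end

section
/- For any tie-splitting parameter β ∈ [0,1], a profile (p_r, p_s) with 0 < p_r < p_s ≤ 1 is a Nash equilibrium of the staying subgame if and only if p_r = p_r*, p_sind ≥ p_r*, and α·p_s·q(p_s) ≤ π_rr(p_r*), where p_r* is the unique maximizer of π_rr over [0,1] and p_sind = c_s/(1−α). -/
/-!
The seller earns nothing at a price above `pr`, and can profitably undercut exactly when
`cs / (1 - α) < pr`, because demand is positive below `1`. For the retailer, the equilibrium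
condition says that `pr` maximizes `(p - cr) * q p` over `(0, ps)` and beats the referral
revenue `α * ps * q ps`. The maximality extends from `(0, ps)` to `[0, 1]`: on prices above the
cost `cr` the margin increases while the concave demand decreases, so `(p - cr) * q p` is
strictly larger between `pr` and `prstar` than at `pr` (`margin_lt_between`), which rules out
`ps ≤ prstar`.
-/

noncomputable section

/-- Moving up from a price `a > cr` towards a price `b` with at least the same direct-sales profit
strictly increases that profit: with `x = (1 - t) a + t b`, concavity of `q` bounds the profit at `x` below
by a product of two linear interpolations, which exceeds the interpolated profits by
`t (1 - t) (b - a) (q a - q b)`. -/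
lemma margin_lt_between {q : ℝ → ℝ} {cr a b x : ℝ}
    (hconc : ConcaveOn ℝ (Set.Icc (0:ℝ) 1) q) (hanti : StrictAntiOn q (Set.Icc (0:ℝ) 1))
    (ha : a ∈ Set.Icc (0:ℝ) 1) (hb : b ∈ Set.Icc (0:ℝ) 1) (hca : cr < a)
    (hax : a < x) (hxb : x < b) (hle : (a - cr) * q a ≤ (b - cr) * q b) :
    (a - cr) * q a < (x - cr) * q x := by
  have hab : a < b := hax.trans hxb
  have hqab : q b < q a := hanti ha hb hab
  obtain ⟨t, ht⟩ : ∃ t, t = (x - a) / (b - a) := ⟨_, rfl⟩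
  have ht0 : 0 < t := by rw [ht]; exact div_pos (by linarith) (by linarith)
  have ht1 : t < 1 := by rw [ht, div_lt_one (by linarith)]; linarith
  have hx : x = (1 - t) * a + t * b := by
    have : t * (b - a) = x - a := by rw [ht]; exact div_mul_cancel₀ _ (by linarith)
    linarith
  have hqx : (1 - t) * q a + t * q b ≤ q x := by
    have h := hconc.2 ha hb (by linarith : 0 ≤ 1 - t) ht0.le (by ring)
    simp only [smul_eq_mul] at h
    rwa [← hx] at h
  have h1 : (x - cr) * ((1 - t) * q a + t * q b) ≤ (x - cr) * q x :=
    mul_le_mul_of_nonneg_left hqx (by linarith)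
  have h2 : (x - cr) * ((1 - t) * q a + t * q b)
      = (1 - t) * ((a - cr) * q a) + t * ((b - cr) * q b)
        + t * (1 - t) * ((b - a) * (q a - q b)) := by
    rw [hx]; ring
  have h3 : 0 < t * (1 - t) * ((b - a) * (q a - q b)) :=
    mul_pos (mul_pos ht0 (by linarith)) (mul_pos (by linarith) (by linarith))
  have h4 : t * ((a - cr) * q a) ≤ t * ((b - cr) * q b) :=
    mul_le_mul_of_nonneg_left hle ht0.le
  linarith

theorem stmt_9
    (q : ℝ → ℝ)
    (hq_diff : Differentiable ℝ q)
    (hq_diff2 : Differentiable ℝ (deriv q))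
    (hq_conc : StrictConcaveOn ℝ (Set.Icc (0:ℝ) 1) q)
    (hq_anti : StrictAntiOn q (Set.Icc (0:ℝ) 1))
    (hq_nonneg : ∀ p ∈ Set.Icc (0:ℝ) 1, 0 ≤ q p)
    (hq_zero : q 0 = 1) (hq_one : q 1 = 0)
    (cr cs α : ℝ) (hcs0 : 0 < cs) (hcsr : cs < cr) (hcr1 : cr < 1)
    (hα : α ∈ Set.Ioo (0:ℝ) 1)
    (β : ℝ) (hβ : β ∈ Set.Icc (0:ℝ) 1)
    (prstar : ℝ) (hpr_mem : prstar ∈ Set.Icc (0:ℝ) 1)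
    (hpr_max : IsMaxOn (fun p => (p - cr) * q p) (Set.Icc (0:ℝ) 1) prstar)
    (hpr_uniq : ∀ p ∈ Set.Icc (0:ℝ) 1,
      IsMaxOn (fun p => (p - cr) * q p) (Set.Icc (0:ℝ) 1) p → p = prstar)
    (pr ps : ℝ) (hpr : 0 < pr) (hprs : pr < ps) (hps1 : ps ≤ 1) :
    IsNash q cr cs α β pr ps ↔
      pr = prstar ∧ cs / (1 - α) ≥ prstar ∧
      α * ps * q ps ≤ (prstar - cr) * q prstar := by
  obtain ⟨hα0, hα1⟩ := hα
  obtain ⟨hβ0, hβ1⟩ := hβ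
  have hpos : ∀ p, 0 ≤ p → p < 1 → 0 < q p := fun p h0 h1 => by
    have := hq_anti ⟨h0, h1.le⟩ ⟨zero_le_one, le_rfl⟩ h1
    rwa [hq_one] at this
  have hps0 : 0 < ps := hpr.trans hprs
  have hmax : ∀ p ∈ Set.Icc (0:ℝ) 1, (p - cr) * q p ≤ (prstar - cr) * q prstar :=
    fun p hp => hpr_max hp
  constructor
  · rintro ⟨-, -, hret, hsel⟩
    have hR : ∀ p, 0 < p → p < ps → (p - cr) * q p ≤ (pr - cr) * q pr := fun p h0 h1 => by
      simpa [retPay, h1, hprs] using hret p ⟨h0, by linarith⟩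
    have hRef : α * ps * q ps ≤ (pr - cr) * q pr := by
      rcases hps1.lt_or_eq with h | h
      · simpa [retPay, hprs, h.not_gt, h.ne'] using hret 1 ⟨one_pos, le_rfl⟩
      · -- At `ps = 1` no overpricing deviation exists, but the referral revenue vanishes.
        have := hR ((max cr pr + 1) / 2)
          (by linarith [le_max_right cr pr])
          (by rw [h]; linarith [max_lt hcr1 (h ▸ hprs)])
        have h2 : 0 < ((max cr pr + 1) / 2 - cr) * q ((max cr pr + 1) / 2) := by
          have hm := max_lt hcr1 (h ▸ hprs)
          exact mul_pos (by linarith [le_max_left cr pr])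
            (hpos _ (by linarith [le_max_right cr pr]) (by linarith))
        rw [h, hq_one, mul_zero]
        linarith
    have hqpr : 0 < q pr := hpos pr hpr.le (by linarith)
    have hcpr : cr < pr := by
      by_contra hle
      rcases hps1.lt_or_eq with h | h
      · have h1 : 0 < α * ps * q ps := mul_pos (mul_pos hα0 hps0) (hpos ps hps0.le h)
        nlinarith
      · have h1 := hR ((cr + 1) / 2) (by linarith) (by rw [h]; linarith)
        have h2 : 0 < ((cr + 1) / 2 - cr) * q ((cr + 1) / 2) :=
          mul_pos (by linarith) (hpos _ (by linarith) (by linarith))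
        nlinarith
    have hprI : pr ∈ Set.Icc (0:ℝ) 1 := ⟨hpr.le, by linarith⟩
    have hlt : prstar < ps := by
      by_contra hge
      have h1 := margin_lt_between (x := (pr + ps) / 2) hq_conc.concaveOn hq_anti hprI hpr_mem
        hcpr (by linarith) (by linarith) (hmax pr hprI)
      linarith [hR ((pr + ps) / 2) (by linarith) (by linarith)]
    have hstar0 : 0 < prstar := by
      have h1 : 0 < (pr - cr) * q pr := mul_pos (by linarith) hqpr
      have h2 := hmax pr hprI
      by_contra hle
      have h3 := hq_nonneg prstar hpr_mem
      nlinarith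
    have heq : pr = prstar :=
      hpr_uniq pr hprI fun p hp => (hmax p hp).trans (hR prstar hstar0 hlt)
    refine ⟨heq, ?_, heq ▸ hRef⟩
    rw [← heq]
    by_contra hlow
    push Not at hlow
    -- Any price strictly between the seller's indifference price and `pr` is a profitable undercut.
    obtain ⟨p, hp1, hp2⟩ := exists_between hlow
    have hind : 0 < cs / (1 - α) := div_pos hcs0 (by linarith)
    have hs := hsel p ⟨by linarith, by linarith⟩
    simp only [selPay, hp2, if_true, hprs.not_gt, hprs.ne', if_false] at hs
    have h1 : cs < p * (1 - α) := (div_lt_iff₀ (by linarith)).1 hp1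
    have h2 : 0 < ((1 - α) * p - cs) * q p :=
      mul_pos (by linarith) (hpos p (by linarith) (by linarith))
    linarith
  · rintro ⟨rfl, hind, hRef⟩
    have hseller : ∀ p, 0 < p → p ≤ pr → ((1 - α) * p - cs) * q p ≤ 0 := fun p h0 h1 => by
      have h2 : p * (1 - α) ≤ cs := (le_div_iff₀ (by linarith)).1 (h1.trans hind)
      exact mul_nonpos_of_nonpos_of_nonneg (by linarith) (hq_nonneg p ⟨h0.le, by linarith⟩)
    refine ⟨⟨hpr, by linarith⟩, ⟨hps0, hps1⟩, ?_, ?_⟩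
    · rintro p ⟨h0, h1⟩
      have hp := hmax p ⟨h0.le, h1⟩
      simp only [retPay, hprs, if_true]
      split_ifs with hlt heq
      · exact hp
      · subst heq
        have h2 := mul_le_mul_of_nonneg_left hp hβ0
        have h3 := mul_le_mul_of_nonneg_left hRef (by linarith : 0 ≤ 1 - β)
        linarith
      · exact hRef
    · rintro p ⟨h0, h1⟩
      simp only [selPay, hprs.not_gt, hprs.ne', if_false]
      split_ifs with hlt heq
      · exact hseller p h0 hlt.le
      · exact mul_nonpos_of_nonneg_of_nonpos (by linarith) (hseller p h0 heq.le)
      · exact le_rfl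
end
end

section
/- Assume α < 1 − c_s and let p_s* be the unique maximizer of π_ss over [0,1]. For any tie-splitting parameter β ∈ [0,1], a profile (p_r, p_s) with 0 < p_s < p_r ≤ 1 is a Nash equilibrium of the staying subgame if and only if p_s = p_s* and sup{π_rr(p') : p' ∈ (0, p_s)} ≤ α·p_s·q(p_s). -/
/-!
The seller's profit from winning the sale is `L p * q p` with `L p = (1 - α) * p - cs` increasing.
Where `L ≥ 0`, this product of an increasing affine function and a decreasing strictly concave one
is strictly concave (`profit_lt_of_lt`).

In an equilibrium with `ps < pr` the seller earns a nonnegative profit, since the price `1` yields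
zero, and `ps` maximizes the profit over `(0, pr)`. If `psstar < pr`, then `ps` is a global
maximizer. If `psstar ≥ pr > ps`, strict concavity makes the profit at prices slightly above `ps`
and below `pr` strictly larger than at `ps`, which is impossible. Hence `ps = psstar`. The retailer
cannot gain by undercutting exactly when the supremum condition holds; a deviation to a tie is
controlled by the same condition, because the inequality extends to `p' = ps` by continuity.
-/

noncomputable section

/-- Strict quasiconcavity of `p ↦ (b * p - c) * q p` to the right of a point `x` where the margin
`b * x - c` is nonnegative: between `x` and a weakly better `y`, the value exceeds that at `x`. -/
lemma profit_lt_of_lt {q : ℝ → ℝ}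
    (hq_conc : StrictConcaveOn ℝ (Set.Icc (0:ℝ) 1) q)
    (hq_anti : StrictAntiOn q (Set.Icc (0:ℝ) 1))
    {b c x y m : ℝ} (hb : 0 < b) (hx : x ∈ Set.Icc (0:ℝ) 1) (hy : y ∈ Set.Icc (0:ℝ) 1)
    (hL : 0 ≤ b * x - c) (hxy : (b * x - c) * q x ≤ (b * y - c) * q y)
    (hxm : x < m) (hmy : m < y) :
    (b * x - c) * q x < (b * m - c) * q m := by
  have hlt : x < y := hxm.trans hmy
  obtain ⟨s, t, hs, ht, hst, rfl⟩ : ∃ s t : ℝ, 0 < s ∧ 0 < t ∧ s + t = 1 ∧ s * x + t * y = m := by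
    have hd : 0 < y - x := sub_pos.2 hlt
    refine ⟨(y - m) / (y - x), (m - x) / (y - x), div_pos (by linarith) hd,
      div_pos (by linarith) hd, ?_, ?_⟩
    · field_simp
      ring
    · field_simp
      ring
  have hq := hq_conc.2 hx hy hlt.ne hs ht hst
  simp only [smul_eq_mul] at hq
  have hqxy := hq_anti hx hy hlt
  have hm : 0 < b * (s * x + t * y) - c := by nlinarith
  have h1 := mul_lt_mul_of_pos_left hq hm
  -- Chebyshev-type identity: the margin increases while demand decreases.
  have h2 : (b * (s * x + t * y) - c) * (s * q x + t * q y)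
      = s * ((b * x - c) * q x) + t * ((b * y - c) * q y)
        + s * t * (b * (y - x)) * (q x - q y) := by
    obtain rfl : s = 1 - t := by linarith
    ring
  have h3 : 0 ≤ s * t * (b * (y - x)) * (q x - q y) := by
    have := sub_pos.2 hlt
    have := sub_pos.2 hqxy
    positivity
  have h4 : (b * x - c) * q x = s * ((b * x - c) * q x) + t * ((b * x - c) * q x) := by
    rw [← add_mul, hst, one_mul]
  have h5 := mul_le_mul_of_nonneg_left hxy ht.le
  linarith

theorem stmt_10
    (q : ℝ → ℝ)
    (hq_diff : Differentiable ℝ q)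
    (hq_diff2 : Differentiable ℝ (deriv q))
    (hq_conc : StrictConcaveOn ℝ (Set.Icc (0:ℝ) 1) q)
    (hq_anti : StrictAntiOn q (Set.Icc (0:ℝ) 1))
    (hq_nonneg : ∀ p ∈ Set.Icc (0:ℝ) 1, 0 ≤ q p)
    (hq_zero : q 0 = 1) (hq_one : q 1 = 0)
    (cr cs α : ℝ) (hcs0 : 0 < cs) (hcsr : cs < cr) (hcr1 : cr < 1)
    (hα : α ∈ Set.Ioo (0:ℝ) 1)
    (hαcs : α < 1 - cs)
    (psstar : ℝ) (hps_mem : psstar ∈ Set.Icc (0:ℝ) 1)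
    (hps_max : IsMaxOn (fun p => ((1 - α) * p - cs) * q p) (Set.Icc (0:ℝ) 1) psstar)
    (hps_uniq : ∀ p ∈ Set.Icc (0:ℝ) 1,
      IsMaxOn (fun p => ((1 - α) * p - cs) * q p) (Set.Icc (0:ℝ) 1) p → p = psstar)
    (β : ℝ) (hβ : β ∈ Set.Icc (0:ℝ) 1)
    (pr ps : ℝ) (hps : 0 < ps) (hpsr : ps < pr) (hpr1 : pr ≤ 1) :
    IsNash q cr cs α β pr ps ↔
      ps = psstar ∧
      sSup ((fun p' => (p' - cr) * q p') '' Set.Ioo (0:ℝ) ps) ≤ α * ps * q ps := by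
  have hps1 : ps < 1 := hpsr.trans_le hpr1
  have hpr0 : 0 < pr := hps.trans hpsr
  have hpsI : ps ∈ Set.Icc (0:ℝ) 1 := ⟨hps.le, hps1.le⟩
  have hmax : ∀ p ∈ Set.Icc (0:ℝ) 1,
      ((1 - α) * p - cs) * q p ≤ ((1 - α) * psstar - cs) * q psstar := fun p hp => hps_max hp
  have hret : retPay q cr α β pr ps = α * ps * q ps := by
    simp [retPay, hpsr.not_gt, hpsr.ne']
  have hsel : selPay q cs α β pr ps = ((1 - α) * ps - cs) * q ps := by
    simp [selPay, hpsr]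
  constructor
  · rintro ⟨-, -, hr, hs⟩
    rw [hret] at hr
    rw [hsel] at hs
    refine ⟨?_, ?_⟩
    · have hdev : ∀ p, 0 < p → p < pr → ((1 - α) * p - cs) * q p ≤ ((1 - α) * ps - cs) * q ps := by
        intro p hp0 hp
        simpa [selPay, hp] using hs p ⟨hp0, hp.le.trans hpr1⟩
      -- The price `1` earns zero, whether or not it ties with the retailer's.
      have hnn : 0 ≤ ((1 - α) * ps - cs) * q ps := by
        simpa [selPay, hpr1.not_gt, hq_one] using hs 1 ⟨one_pos, le_rfl⟩
      have hqps : 0 < q ps := by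
        simpa [hq_one] using hq_anti hpsI ⟨zero_le_one, le_rfl⟩ hps1
      have hL : 0 ≤ (1 - α) * ps - cs := nonneg_of_mul_nonneg_left hnn hqps
      have hb : 0 < 1 - α := sub_pos.2 hα.2
      have hstar0 : 0 < psstar := by
        rcases hps_mem.1.eq_or_lt with h | h
        · have := hmax ps hpsI
          rw [← h, hq_zero] at this
          linarith
        · exact h
      by_cases hlt : psstar < pr
      · exact hps_uniq ps hpsI fun p hp => (hmax p hp).trans (hdev psstar hstar0 hlt)
      · exfalso
        push Not at hlt
        obtain ⟨m, hm1, hm2⟩ := exists_between hpsr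
        exact (profit_lt_of_lt hq_conc hq_anti hb hpsI hps_mem hL (hmax ps hpsI) hm1
          (hm2.trans_le hlt)).not_ge (hdev m (hps.trans hm1) hm2)
    · refine csSup_le ((Set.nonempty_Ioo.2 hps).image _) ?_
      rintro _ ⟨p, ⟨hp0, hp⟩, rfl⟩
      simpa [retPay, hp] using hr p ⟨hp0, hp.le.trans hps1.le⟩
  · rintro ⟨rfl, hsup⟩
    -- Boundedness is needed because the real supremum of an unbounded set is `0`.
    have hbdd : BddAbove ((fun p' => (p' - cr) * q p') '' Set.Ioo (0:ℝ) ps) := by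
      refine ⟨1, ?_⟩
      rintro _ ⟨p, ⟨hp0, hp⟩, rfl⟩
      have hpI : p ∈ Set.Icc (0:ℝ) 1 := ⟨hp0.le, hp.le.trans hps1.le⟩
      have h0 := hq_nonneg p hpI
      have h1 : q p ≤ 1 := by
        simpa [hq_zero] using (hq_anti ⟨le_rfl, zero_le_one⟩ hpI hp0).le
      have h2 : p - cr ≤ 1 := by linarith
      change (p - cr) * q p ≤ 1
      nlinarith
    have hunder : ∀ p ∈ Set.Ioo (0:ℝ) ps, (p - cr) * q p ≤ α * ps * q ps := fun p hp =>
      (le_csSup hbdd (Set.mem_image_of_mem _ hp)).trans hsup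
    have htie : (ps - cr) * q ps ≤ α * ps * q ps := by
      have hqc := hq_diff.continuous
      refine le_on_closure (f := fun p => (p - cr) * q p) (g := fun _ => α * ps * q ps) hunder
        (by fun_prop) continuousOn_const ?_
      rw [closure_Ioo hps.ne]
      exact ⟨hps.le, le_rfl⟩
    refine ⟨⟨hpr0, hpr1⟩, ⟨hps, hps1.le⟩, ?_, ?_⟩
    · rintro p ⟨hp0, hp1⟩
      rw [hret, retPay]
      split_ifs with h1 h2
      · exact hunder p ⟨hp0, h1⟩
      · subst h2
        have := mul_le_mul_of_nonneg_left htie hβ.1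
        linarith
      · exact le_rfl
    · rintro p ⟨hp0, hp1⟩
      have hp := hmax p ⟨hp0.le, hp1⟩
      have hnn : 0 ≤ ((1 - α) * ps - cs) * q ps := by
        simpa [hq_one] using hmax 1 ⟨zero_le_one, le_rfl⟩
      rw [hsel, selPay]
      split_ifs
      · exact hp
      · have h1 := mul_le_mul_of_nonneg_left hp (sub_nonneg.2 hβ.2)
        have h2 := mul_nonneg hβ.1 hnn
        linarith
      · exact hnn
end
end

section
/- If α ≥ 1 − c_r/p_r*, then the set S = {p ∈ [0,1] : α·p·q(p) = π_rr(p_r*)} is nonempty, and its greatest element p† satisfies p_r* ≤ p† < 1. In particular, when α = 1 − c_r/p_r*, the greatest element is p† = p_r*. -/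
noncomputable section

/-!
Write `M = (prstar - cr) * q prstar`. The maximum `M` is positive, since the midpoint of `[cr, 1]`
already earns a positive payoff; hence `cr < prstar` and `0 < q prstar`. The bound on `α` says that
`α * p * q p` is at least `M` at `p = prstar`, while it vanishes at `p = 1`, so the intermediate
value theorem gives a solution in `[prstar, 1]`. The solution set is compact, so it has a greatest
element, which is at least `prstar` and differs from `1`.

If `α = 1 - cr / prstar`, then `p - cr - α * p = (1 - α) * (p - prstar)`. A solution `p > prstar`
would therefore satisfy `(p - cr) * q p > α * p * q p = M`, contradicting maximality.
-/

theorem stmt_11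
    (q : ℝ → ℝ)
    (hq_diff : Differentiable ℝ q)
    (hq_diff2 : Differentiable ℝ (deriv q))
    (hq_conc : StrictConcaveOn ℝ (Set.Icc (0:ℝ) 1) q)
    (hq_anti : StrictAntiOn q (Set.Icc (0:ℝ) 1))
    (hq_nonneg : ∀ p ∈ Set.Icc (0:ℝ) 1, 0 ≤ q p)
    (hq_zero : q 0 = 1) (hq_one : q 1 = 0)
    (cr cs α : ℝ) (hcs0 : 0 < cs) (hcsr : cs < cr) (hcr1 : cr < 1)
    (hα : α ∈ Set.Ioo (0:ℝ) 1)
    (prstar : ℝ) (hpr_mem : prstar ∈ Set.Icc (0:ℝ) 1)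
    (hpr_max : IsMaxOn (fun p => (p - cr) * q p) (Set.Icc (0:ℝ) 1) prstar)
    (hpr_uniq : ∀ p ∈ Set.Icc (0:ℝ) 1,
      IsMaxOn (fun p => (p - cr) * q p) (Set.Icc (0:ℝ) 1) p → p = prstar)
    (hαlarge : 1 - cr / prstar ≤ α) :
    ∃ pd : ℝ,
      IsGreatest {p : ℝ | p ∈ Set.Icc (0:ℝ) 1 ∧
        α * p * q p = (prstar - cr) * q prstar} pd ∧
      prstar ≤ pd ∧ pd < 1 ∧
      (α = 1 - cr / prstar → pd = prstar) := by
  obtain ⟨hα0, hα1⟩ := hα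
  have hcr0 : 0 < cr := hcs0.trans hcsr
  have hqpos : ∀ p, 0 ≤ p → p < 1 → 0 < q p := fun p h0 h1 => by
    have := hq_anti ⟨h0, h1.le⟩ ⟨zero_le_one, le_rfl⟩ h1
    rwa [hq_one] at this
  have hmax : ∀ p ∈ Set.Icc (0:ℝ) 1, (p - cr) * q p ≤ (prstar - cr) * q prstar :=
    fun p hp => hpr_max hp
  have hM : 0 < (prstar - cr) * q prstar := by
    have h1 := hmax ((cr + 1) / 2) ⟨by linarith, by linarith⟩
    have h2 := hqpos ((cr + 1) / 2) (by linarith) (by linarith)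
    have h3 : 0 < ((cr + 1) / 2 - cr) * q ((cr + 1) / 2) := mul_pos (by linarith) h2
    linarith
  have hq0 := hq_nonneg prstar hpr_mem
  have hcp : cr < prstar := by
    by_contra! h
    exact hM.not_ge (mul_nonpos_of_nonpos_of_nonneg (sub_nonpos.2 h) hq0)
  have hp0 : 0 < prstar := hcr0.trans hcp
  have hkey : (1 - cr / prstar) * prstar = prstar - cr := by
    field_simp
  have hge : (prstar - cr) * q prstar ≤ α * prstar * q prstar := by
    rw [← hkey]
    gcongr
  have hcont : Continuous fun p => α * p * q p := by
    have := hq_diff.continuous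
    fun_prop
  obtain ⟨p₀, hp₀, hp₀eq⟩ : (prstar - cr) * q prstar ∈
      (fun p => α * p * q p) '' Set.Icc prstar 1 :=
    intermediate_value_Icc' hpr_mem.2 hcont.continuousOn ⟨by simpa [hq_one] using hM.le, hge⟩
  have hcomp : IsCompact {p : ℝ | p ∈ Set.Icc (0:ℝ) 1 ∧
      α * p * q p = (prstar - cr) * q prstar} :=
    isCompact_Icc.inter_right (isClosed_eq hcont continuous_const)
  obtain ⟨pd, hpd⟩ := hcomp.exists_isGreatest ⟨p₀, ⟨hp0.le.trans hp₀.1, hp₀.2⟩, hp₀eq⟩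
  have hle : prstar ≤ pd := hp₀.1.trans (hpd.2 ⟨⟨hp0.le.trans hp₀.1, hp₀.2⟩, hp₀eq⟩)
  obtain ⟨hpdI, hpdeq⟩ := hpd.1
  have hlt : pd < 1 := by
    refine lt_of_le_of_ne hpdI.2 fun h => ?_
    rw [h, hq_one, mul_zero] at hpdeq
    exact hM.ne hpdeq
  refine ⟨pd, hpd, hle, hlt, fun hαeq => ?_⟩
  by_contra hne
  have hgt : prstar < pd := lt_of_le_of_ne hle (Ne.symm hne)
  rw [← hαeq] at hkey
  have h1 : 0 < (1 - α) * (pd - prstar) * q pd :=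
    mul_pos (mul_pos (by linarith) (by linarith)) (hqpos pd hpdI.1 hlt)
  have h2 : (1 - α) * (pd - prstar) * q pd = (pd - cr) * q pd - α * pd * q pd := by
    linear_combination q pd * hkey
  have h3 := hmax pd hpdI
  linarith
end
end

section
/- Suppose the set S = {p ∈ [0,1] : α·p·q(p) = π_rr(p_r*)} is nonempty, and let p† be its greatest element. Then p_rind ≤ p_r* if and only if p† ≤ p_r*, where p_rind = c_r/(1−α) and p_r* is the unique maximizer of π_rr over [0,1]. -/
/-!
Write `M = (p* - cr) q(p*)` for the optimal value; it is positive, since `cr < 1` leaves room for a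
price with positive margin and positive demand. The inequality `cr / (1 - α) ≤ p` just says
`α p ≤ p - cr`: the referral fee does not exceed the retailer's margin at price `p`.

* The fee revenue at `pd` is `M`, which is at least `(pd - cr) q(pd)` by optimality of `p*`.
  Dividing by `q(pd) > 0` gives `pd - cr ≤ α pd`, i.e. `pd ≤ cr / (1 - α)`. This gives one direction.
* If `p* < cr / (1 - α)`, then `α p* q(p*) > M`, while the fee revenue at price `1` is `0 < M`. By the
  intermediate value theorem it equals `M` at some price beyond `p*`, so `pd > p*`.
-/

theorem stmt_12
    (q : ℝ → ℝ)
    (hq_diff : Differentiable ℝ q)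
    (hq_diff2 : Differentiable ℝ (deriv q))
    (hq_conc : StrictConcaveOn ℝ (Set.Icc (0:ℝ) 1) q)
    (hq_anti : StrictAntiOn q (Set.Icc (0:ℝ) 1))
    (hq_nonneg : ∀ p ∈ Set.Icc (0:ℝ) 1, 0 ≤ q p)
    (hq_zero : q 0 = 1) (hq_one : q 1 = 0)
    (cr cs α : ℝ) (hcs0 : 0 < cs) (hcsr : cs < cr) (hcr1 : cr < 1)
    (hα : α ∈ Set.Ioo (0:ℝ) 1)
    (prstar : ℝ) (hpr_mem : prstar ∈ Set.Icc (0:ℝ) 1)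
    (hpr_max : IsMaxOn (fun p => (p - cr) * q p) (Set.Icc (0:ℝ) 1) prstar)
    (hpr_uniq : ∀ p ∈ Set.Icc (0:ℝ) 1,
      IsMaxOn (fun p => (p - cr) * q p) (Set.Icc (0:ℝ) 1) p → p = prstar)
    (pd : ℝ)
    (hpd : IsGreatest {p : ℝ | p ∈ Set.Icc (0:ℝ) 1 ∧
      α * p * q p = (prstar - cr) * q prstar} pd) :
    cr / (1 - α) ≤ prstar ↔ pd ≤ prstar := by
  obtain ⟨hα0, hα1⟩ := hα
  obtain ⟨⟨⟨hpd0, hpd1⟩, hpd_eq⟩, hpd_ub⟩ := hpd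
  obtain ⟨hp0, hp1⟩ := hpr_mem
  have hmax : ∀ p ∈ Set.Icc (0:ℝ) 1, (p - cr) * q p ≤ (prstar - cr) * q prstar :=
    fun p hp => hpr_max hp
  have hcr0 : 0 < cr := hcs0.trans hcsr
  have hM : 0 < (prstar - cr) * q prstar := by
    -- The midpoint of `cr` and `1` already yields a positive profit.
    have hmem : (cr + 1) / 2 ∈ Set.Icc (0:ℝ) 1 := ⟨by linarith, by linarith⟩
    have hq : q 1 < q ((cr + 1) / 2) :=
      hq_anti hmem (Set.right_mem_Icc.2 zero_le_one) (by linarith)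
    rw [hq_one] at hq
    exact (mul_pos (by linarith) hq).trans_le (hmax _ hmem)
  have hqp : 0 < q prstar :=
    (hq_nonneg _ ⟨hp0, hp1⟩).lt_of_ne fun h => by simp [← h] at hM
  constructor
  · intro h
    have hqd : 0 < q pd :=
      (hq_nonneg _ ⟨hpd0, hpd1⟩).lt_of_ne fun h => by
        rw [← hpd_eq, ← h, mul_zero] at hM
        exact hM.false
    have hle : pd - cr ≤ α * pd := by
      have := hmax pd ⟨hpd0, hpd1⟩
      rw [← hpd_eq] at this
      exact le_of_mul_le_mul_right this hqd
    refine le_trans ?_ h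
    rw [le_div_iff₀ (by linarith)]
    linarith
  · intro h
    by_contra! hlt
    rw [lt_div_iff₀ (by linarith)] at hlt
    have hgt : (prstar - cr) * q prstar < α * prstar * q prstar :=
      mul_lt_mul_of_pos_right (by linarith) hqp
    have hcont : ContinuousOn (fun p => α * p * q p) (Set.Icc prstar 1) :=
      ((continuous_const.mul continuous_id).mul hq_diff.continuous).continuousOn
    obtain ⟨x, ⟨hx0, hx1⟩, hx⟩ := intermediate_value_Icc' hp1 hcont
      (show (prstar - cr) * q prstar ∈ Set.Icc (α * 1 * q 1) (α * prstar * q prstar) from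
        ⟨by rw [hq_one, mul_zero]; exact hM.le, hgt.le⟩)
    have hxpd : x ≤ pd := hpd_ub ⟨⟨hp0.trans hx0, hx1⟩, hx⟩
    have hxp : x = prstar := le_antisymm (hxpd.trans h) hx0
    subst hxp
    exact hgt.ne' hx
end

section
/- Assume α < 1 − c_s, and let p_r* and p_s* be the unique maximizers over [0,1] of π_rr and π_ss respectively. Then p_s* ≤ p_r* if and only if α ≤ 1 − c_s/c_r, and p_s* = p_r* if and only if α = 1 − c_s/c_r. -/
/-!
Dividing `π_ss` by `1 - α > 0` turns it into `(p - d) * q p` with effective cost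
`d = cs / (1 - α)`, and `α < 1 - cs` says exactly that `d < 1`. Both prices are thus monopoly
prices for the same demand, with costs `d` and `cr`, and the theorem reduces to strict monotonicity
of the monopoly price in the cost (`monopoly_price_lt`): revealed preference gives weak
monotonicity, and the two first-order conditions at a common maximizer would force demand to
vanish there, so the prices differ when the costs do. Finally `d ≤ cr` iff `α ≤ 1 - cs / cr`.
-/

/-- A profit-maximizing price exceeds the cost and lies below the choke price `1`: the price
`(1 + c) / 2` earns a positive profit, so the maximal profit is positive. -/
lemma monopoly_price_interior {q : ℝ → ℝ}
    (hq_anti : StrictAntiOn q (Set.Icc (0:ℝ) 1)) (hq_one : q 1 = 0)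
    {c x : ℝ} (hc0 : 0 < c) (hc1 : c < 1) (hx : x ∈ Set.Icc (0:ℝ) 1)
    (hmax : IsMaxOn (fun p => (p - c) * q p) (Set.Icc (0:ℝ) 1) x) :
    c < x ∧ x < 1 ∧ 0 < q x := by
  have hmem : (1 + c) / 2 ∈ Set.Icc (0:ℝ) 1 := ⟨by linarith, by linarith⟩
  have one_mem : (1:ℝ) ∈ Set.Icc (0:ℝ) 1 := ⟨zero_le_one, le_rfl⟩
  have hqm : 0 < q ((1 + c) / 2) := hq_one ▸ hq_anti hmem one_mem (by linarith)
  have hpos : 0 < (x - c) * q x :=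
    (mul_pos (by linarith) hqm).trans_le (isMaxOn_iff.1 hmax _ hmem)
  have hx1 : x < 1 := by
    refine lt_of_le_of_ne hx.2 ?_
    rintro rfl
    simp [hq_one] at hpos
  have hqx : 0 < q x := hq_one ▸ hq_anti hx one_mem hx1
  have hxc : 0 < x - c := pos_of_mul_pos_left hpos hqx.le
  exact ⟨by linarith, hx1, hqx⟩

/-- First-order condition for an interior profit-maximizing price. -/
lemma monopoly_price_foc {q : ℝ → ℝ} (hq_diff : Differentiable ℝ q) {c x : ℝ}
    (hx0 : 0 < x) (hx1 : x < 1)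
    (hmax : IsMaxOn (fun p => (p - c) * q p) (Set.Icc (0:ℝ) 1) x) :
    q x + (x - c) * deriv q x = 0 := by
  have hloc := hmax.isLocalMax (Icc_mem_nhds hx0 hx1)
  have hder := ((hasDerivAt_id x).sub_const c).mul (hq_diff x).hasDerivAt
  simpa using hloc.hasDerivAt_eq_zero hder

/-- A strictly higher cost gives a strictly higher profit-maximizing price. -/
lemma monopoly_price_lt {q : ℝ → ℝ} (hq_diff : Differentiable ℝ q)
    (hq_anti : StrictAntiOn q (Set.Icc (0:ℝ) 1)) (hq_one : q 1 = 0)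
    {c d x y : ℝ} (hc0 : 0 < c) (hcd : c < d) (hd1 : d < 1)
    (hx : x ∈ Set.Icc (0:ℝ) 1)
    (hxmax : IsMaxOn (fun p => (p - c) * q p) (Set.Icc (0:ℝ) 1) x)
    (hy : y ∈ Set.Icc (0:ℝ) 1)
    (hymax : IsMaxOn (fun p => (p - d) * q p) (Set.Icc (0:ℝ) 1) y) :
    x < y := by
  have h1 : (y - c) * q y ≤ (x - c) * q x := isMaxOn_iff.1 hxmax y hy
  have h2 : (x - d) * q x ≤ (y - d) * q y := isMaxOn_iff.1 hymax x hx
  have hle : x ≤ y := by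
    by_contra! hlt
    have hq : q x < q y := hq_anti hy hx hlt
    -- the two revealed-preference inequalities add up to `0 ≤ (d - c) * (q x - q y)`
    nlinarith [mul_pos (sub_pos.2 hcd) (sub_pos.2 hq)]
  refine lt_of_le_of_ne hle ?_
  rintro rfl
  obtain ⟨hcx, hx1, hqx⟩ := monopoly_price_interior hq_anti hq_one hc0 (hcd.trans hd1) hx hxmax
  have f1 := monopoly_price_foc hq_diff (hc0.trans hcx) hx1 hxmax
  have f2 := monopoly_price_foc hq_diff (hc0.trans hcx) hx1 hymax
  have hd : (d - c) * deriv q x = 0 := by linarith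
  have hd0 : deriv q x = 0 := (mul_eq_zero.1 hd).resolve_left (sub_pos.2 hcd).ne'
  rw [hd0] at f1
  linarith

noncomputable section

theorem stmt_13
    (q : ℝ → ℝ)
    (hq_diff : Differentiable ℝ q)
    (hq_diff2 : Differentiable ℝ (deriv q))
    (hq_conc : StrictConcaveOn ℝ (Set.Icc (0:ℝ) 1) q)
    (hq_anti : StrictAntiOn q (Set.Icc (0:ℝ) 1))
    (hq_nonneg : ∀ p ∈ Set.Icc (0:ℝ) 1, 0 ≤ q p)
    (hq_zero : q 0 = 1) (hq_one : q 1 = 0)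
    (cr cs α : ℝ) (hcs0 : 0 < cs) (hcsr : cs < cr) (hcr1 : cr < 1)
    (hα : α ∈ Set.Ioo (0:ℝ) 1)
    (hαcs : α < 1 - cs)
    (prstar : ℝ) (hpr_mem : prstar ∈ Set.Icc (0:ℝ) 1)
    (hpr_max : IsMaxOn (fun p => (p - cr) * q p) (Set.Icc (0:ℝ) 1) prstar)
    (hpr_uniq : ∀ p ∈ Set.Icc (0:ℝ) 1,
      IsMaxOn (fun p => (p - cr) * q p) (Set.Icc (0:ℝ) 1) p → p = prstar)
    (psstar : ℝ) (hps_mem : psstar ∈ Set.Icc (0:ℝ) 1)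
    (hps_max : IsMaxOn (fun p => ((1 - α) * p - cs) * q p) (Set.Icc (0:ℝ) 1) psstar)
    (hps_uniq : ∀ p ∈ Set.Icc (0:ℝ) 1,
      IsMaxOn (fun p => ((1 - α) * p - cs) * q p) (Set.Icc (0:ℝ) 1) p → p = psstar) :
    (psstar ≤ prstar ↔ α ≤ 1 - cs / cr) ∧
    (psstar = prstar ↔ α = 1 - cs / cr) := by
  have hα1 : 0 < 1 - α := sub_pos.2 hα.2
  have hcr0 : 0 < cr := hcs0.trans hcsr
  obtain ⟨d, hd⟩ : ∃ d, d = cs / (1 - α) := ⟨_, rfl⟩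
  have hcs : cs = (1 - α) * d := by rw [hd]; field_simp
  have hd0 : 0 < d := hd ▸ div_pos hcs0 hα1
  have hd1 : d < 1 := by rw [hd, div_lt_one hα1]; linarith
  have hmax : IsMaxOn (fun p => (p - d) * q p) (Set.Icc (0:ℝ) 1) psstar := by
    refine isMaxOn_iff.2 fun p hp => le_of_mul_le_mul_left ?_ hα1
    have h := isMaxOn_iff.1 hps_max p hp
    rw [hcs] at h
    linarith
  have hthr : 1 - cs / cr - α = (1 - α) * (cr - d) / cr := by
    rw [hcs]; field_simp; ring
  rcases lt_trichotomy d cr with h | h | h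
  · have hlt := monopoly_price_lt hq_diff hq_anti hq_one hd0 h hcr1 hps_mem hmax hpr_mem hpr_max
    have hpos : 0 < (1 - α) * (cr - d) / cr := div_pos (mul_pos hα1 (sub_pos.2 h)) hcr0
    have ha : α < 1 - cs / cr := by linarith
    exact ⟨iff_of_true hlt.le ha.le, iff_of_false hlt.ne ha.ne⟩
  · have heq : psstar = prstar := hpr_uniq _ hps_mem (h ▸ hmax)
    have ha : α = 1 - cs / cr := by
      rw [h, sub_self, mul_zero, zero_div] at hthr
      linarith
    exact ⟨iff_of_true heq.le ha.le, iff_of_true heq ha⟩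
  · have hlt := monopoly_price_lt hq_diff hq_anti hq_one hcr0 h hd1 hpr_mem hpr_max hps_mem hmax
    have hneg : (1 - α) * (cr - d) / cr < 0 :=
      div_neg_of_neg_of_pos (mul_neg_of_pos_of_neg hα1 (sub_neg.2 h)) hcr0
    have ha : 1 - cs / cr < α := by linarith
    exact ⟨iff_of_false hlt.not_ge ha.not_ge, iff_of_false hlt.ne' ha.ne'⟩
end
end

section
/- Assume α < 1 − c_s, suppose the set S = {p ∈ [0,1] : α·p·q(p) = π_rr(p_r*)} is nonempty, and let p† be its greatest element. If 1 − c_s/c_r ≤ α < 1 − c_r/p_r*, then p† < p_s*; if instead 1 − c_r/p_r* ≤ α ≤ 1 − c_s/c_r, then p_s* ≤ p†. Here p_r* and p_s* are the unique maximizers over [0,1] of π_rr and π_ss respectively. -/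
/-!
Write `V = (r - cr) q(r)` with `r = prstar`, and `k = cs / (1 - α)`, so that `psstar` maximizes
`(p - k) q(p)`. The maximizer of `(p - c) q(p)` is monotone in the cost `c`
(`maximizer_le_of_cost_le`), so the comparison of `α` with `1 - cs / cr`, i.e. of `k` with `cr`,
orders `r` and `psstar`; the comparison of `α` with `1 - cr / r` orders `α r q(r)` and `V`.

* If `cr ≤ k` and `α r q(r) < V`: revenue `p q(p)` on `[r, 1]` never exceeds its value at `r`, so
  every solution of `α p q(p) = V` lies strictly below `r ≤ psstar`.
* If `k ≤ cr` and `V ≤ α r q(r)`: since `α p q(p)` vanishes at `1` and `V > 0`, the intermediate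
  value theorem gives a solution in `[r, 1]`, so the greatest one is at least `r ≥ psstar`.
-/

noncomputable section

/-- Monotone comparative statics: adding the two optimality inequalities gives
`(d - c) q(y) ≤ (d - c) q(x)`. Uniqueness of the maximizer is needed only when `c = d`. -/
theorem maximizer_le_of_cost_le {q : ℝ → ℝ} {I : Set ℝ} (hq : StrictAntiOn q I)
    {c d x y : ℝ} (hcd : c ≤ d) (hx : x ∈ I) (hy : y ∈ I)
    (hxmax : ∀ p ∈ I, (p - c) * q p ≤ (x - c) * q x)
    (hymax : ∀ p ∈ I, (p - d) * q p ≤ (y - d) * q y)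
    (huniq : c = d → x = y) : x ≤ y := by
  rcases hcd.eq_or_lt with h | h
  · exact (huniq h).le
  · by_contra! hyx
    have hlt := hq hy hx hyx
    nlinarith [hxmax y hy, hymax x hx, mul_pos (sub_pos.2 h) (sub_pos.2 hlt)]

theorem stmt_14
    (q : ℝ → ℝ)
    (hq_diff : Differentiable ℝ q)
    (hq_diff2 : Differentiable ℝ (deriv q))
    (hq_conc : StrictConcaveOn ℝ (Set.Icc (0:ℝ) 1) q)
    (hq_anti : StrictAntiOn q (Set.Icc (0:ℝ) 1))
    (hq_nonneg : ∀ p ∈ Set.Icc (0:ℝ) 1, 0 ≤ q p)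
    (hq_zero : q 0 = 1) (hq_one : q 1 = 0)
    (cr cs α : ℝ) (hcs0 : 0 < cs) (hcsr : cs < cr) (hcr1 : cr < 1)
    (hα : α ∈ Set.Ioo (0:ℝ) 1)
    (hαcs : α < 1 - cs)
    (prstar : ℝ) (hpr_mem : prstar ∈ Set.Icc (0:ℝ) 1)
    (hpr_max : IsMaxOn (fun p => (p - cr) * q p) (Set.Icc (0:ℝ) 1) prstar)
    (hpr_uniq : ∀ p ∈ Set.Icc (0:ℝ) 1,
      IsMaxOn (fun p => (p - cr) * q p) (Set.Icc (0:ℝ) 1) p → p = prstar)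
    (psstar : ℝ) (hps_mem : psstar ∈ Set.Icc (0:ℝ) 1)
    (hps_max : IsMaxOn (fun p => ((1 - α) * p - cs) * q p) (Set.Icc (0:ℝ) 1) psstar)
    (hps_uniq : ∀ p ∈ Set.Icc (0:ℝ) 1,
      IsMaxOn (fun p => ((1 - α) * p - cs) * q p) (Set.Icc (0:ℝ) 1) p → p = psstar)
    (pd : ℝ)
    (hpd : IsGreatest {p : ℝ | p ∈ Set.Icc (0:ℝ) 1 ∧
      α * p * q p = (prstar - cr) * q prstar} pd) :
    (1 - cs / cr ≤ α ∧ α < 1 - cr / prstar → pd < psstar) ∧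
    (1 - cr / prstar ≤ α ∧ α ≤ 1 - cs / cr → psstar ≤ pd) := by
  obtain ⟨hα0, hα1⟩ := hα
  have hcr0 : 0 < cr := hcs0.trans hcsr
  have hα1' : 0 < 1 - α := by linarith
  have hrmax : ∀ p ∈ Set.Icc (0:ℝ) 1, (p - cr) * q p ≤ (prstar - cr) * q prstar := hpr_max
  have hk : ∀ p, ((1 - α) * p - cs) * q p = (1 - α) * ((p - cs / (1 - α)) * q p) := by
    intro p
    field_simp
  have hsmax : ∀ p ∈ Set.Icc (0:ℝ) 1,
      (p - cs / (1 - α)) * q p ≤ (psstar - cs / (1 - α)) * q psstar := by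
    intro p hp
    have h : ((1 - α) * p - cs) * q p ≤ ((1 - α) * psstar - cs) * q psstar := hps_max hp
    rw [hk, hk] at h
    exact le_of_mul_le_mul_left h hα1'
  -- With equal effective costs, `psstar` also maximizes `(p - cr) * q p`.
  have huniq : cr = cs / (1 - α) → psstar = prstar := by
    intro h
    apply hpr_uniq psstar hps_mem
    intro p hp
    have := hsmax p hp
    rwa [← h] at this
  -- The midpoint of `[cr, 1]` shows that the optimal profit is positive.
  have hV : 0 < (prstar - cr) * q prstar := by
    have hm : (cr + 1) / 2 ∈ Set.Icc (0:ℝ) 1 := ⟨by linarith, by linarith⟩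
    have hqm := hq_anti hm (Set.right_mem_Icc.2 zero_le_one) (by linarith)
    rw [hq_one] at hqm
    exact (mul_pos (by linarith) hqm).trans_le (hrmax _ hm)
  have hqr : 0 < q prstar := by
    rcases (hq_nonneg _ hpr_mem).eq_or_lt with h | h
    · rw [← h] at hV
      simp at hV
    · exact h
  have hrc : cr < prstar := by
    have := pos_of_mul_pos_left hV hqr.le
    linarith
  have hr0 : 0 < prstar := hcr0.trans hrc
  obtain ⟨⟨hpd_mem, hpd_eq⟩, hpd_ub⟩ := hpd
  constructor
  · rintro ⟨h1, h2⟩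
    have hcost : cr ≤ cs / (1 - α) := by
      rw [le_div_iff₀ hα1', mul_comm, ← le_div_iff₀ hcr0]
      linarith
    have hrs : prstar ≤ psstar :=
      maximizer_le_of_cost_le hq_anti hcost hpr_mem hps_mem hrmax hsmax fun h => (huniq h).symm
    have hlt : α * prstar < prstar - cr := by
      have h3 : cr / prstar < 1 - α := by linarith
      rw [div_lt_iff₀ hr0] at h3
      linarith
    by_contra! hle
    have hq_le : q pd ≤ q prstar := hq_anti.antitoneOn hpr_mem hpd_mem (hrs.trans hle)
    -- Revenue is profit plus `cr * q`, and both are smaller at `pd` than at `prstar`.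
    have hrev : pd * q pd ≤ prstar * q prstar := by
      nlinarith [hrmax pd hpd_mem, mul_nonneg hcr0.le (sub_nonneg.2 hq_le)]
    have h4 := mul_le_mul_of_nonneg_left hrev hα0.le
    have h5 := mul_lt_mul_of_pos_right hlt hqr
    linarith
  · rintro ⟨h1, h2⟩
    have hcost : cs / (1 - α) ≤ cr := by
      rw [div_le_iff₀ hα1', mul_comm, ← div_le_iff₀ hcr0]
      linarith
    have hsr : psstar ≤ prstar :=
      maximizer_le_of_cost_le hq_anti hcost hps_mem hpr_mem hsmax hrmax fun h => huniq h.symm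
    have hge : prstar - cr ≤ α * prstar := by
      have h3 : 1 - α ≤ cr / prstar := by linarith
      rw [le_div_iff₀ hr0] at h3
      linarith
    have hcont : ContinuousOn (fun p => α * p * q p) (Set.Icc prstar 1) :=
      ((continuous_const.mul continuous_id).mul hq_diff.continuous).continuousOn
    obtain ⟨p, hp, hpe⟩ := intermediate_value_Icc' hpr_mem.2 hcont
      (show (prstar - cr) * q prstar ∈ Set.Icc (α * 1 * q 1) (α * prstar * q prstar) from
        ⟨by rw [hq_one, mul_zero]; exact hV.le, mul_le_mul_of_nonneg_right hge hqr.le⟩)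
    exact hsr.trans (hp.1.trans (hpd_ub ⟨⟨hr0.le.trans hp.1, hp.2⟩, hpe⟩))
end
end

section
/- Assume α < 1 − c_s and let p_s* be the unique maximizer of π_ss over [0,1]. In the staying subgame with any tie-splitting parameter β ∈ [0,1]: (a) every seller price p_s ∈ (0, p_sind) is weakly dominated by the price 1; (b) every seller price p_s ∈ (p_s*, 1] is weakly dominated by the price p_s*; and (c) for any two prices p_1, p_2 with p_sind < p_1 < p_2 < p_s*, neither weakly dominates the other. Here a seller price s is weakly dominated by s' if for every retailer price p_r ∈ (0,1] the seller's payoff under (p_r, s') is at least its payoff under (p_r, s), with strict inequality for at least one retailer price. -/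
/-!
Write `f p = ((1 - α) * p - cs) * q p` for the seller's margin profit. Since
`cs / (1 - α) < 1`, `f` is negative below the indifference price and positive between it and `1`,
while `f 1 = 0`; so the price `1` always earns `0`, and the maximizer `psstar` lies strictly between
the indifference price and `1` with `f psstar > 0`. Undercutting with `psstar` beats any higher
price: it wins against more retailer prices and earns at least as much when it wins.
For `p1 < p2` between the indifference price and `psstar`, a retailer price in `(p1, p2)` favours
`p1`, and the retailer price `1` favours `p2` because `f p1 < f p2`. This last inequality
(`profit_lt_of_lt_max`) holds because `f` is the product of an increasing affine function and a
decreasing strictly concave one, both nonnegative there, hence lies above its chords.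
-/

noncomputable section

/-- Seller price `s` is weakly dominated by seller price `s'`. -/
def SelDom (q : ℝ → ℝ) (cs α β : ℝ) (s s' : ℝ) : Prop :=
  (∀ pr ∈ Set.Ioc (0:ℝ) 1, selPay q cs α β pr s ≤ selPay q cs α β pr s') ∧
  (∃ pr ∈ Set.Ioc (0:ℝ) 1, selPay q cs α β pr s < selPay q cs α β pr s')

/-- On prices with nonnegative margin, the profit is strictly increasing below any price `s` that
earns at least as much. With `p2 = u * p1 + v * s`, strict concavity of `q` gives a strict lower
bound on the profit at `p2`, and the cross term
`u * v * (margin s - margin p1) * (q p1 - q s)` is nonnegative. -/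
lemma profit_lt_of_lt_max {q : ℝ → ℝ} {a c p1 p2 s : ℝ}
    (hconc : StrictConcaveOn ℝ (Set.Icc (0:ℝ) 1) q)
    (hanti : StrictAntiOn q (Set.Icc (0:ℝ) 1)) (ha : 0 < a)
    (h1 : p1 ∈ Set.Icc (0:ℝ) 1) (hs : s ∈ Set.Icc (0:ℝ) 1)
    (hm : 0 ≤ a * p1 - c) (h12 : p1 < p2) (h2s : p2 < s)
    (hf : (a * p1 - c) * q p1 ≤ (a * s - c) * q s) :
    (a * p1 - c) * q p1 < (a * p2 - c) * q p2 := by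
  have h1s : p1 < s := h12.trans h2s
  have hd : 0 < s - p1 := sub_pos.2 h1s
  obtain ⟨u, v, hu, hv, huv, rfl⟩ : ∃ u v : ℝ, 0 < u ∧ 0 < v ∧ u + v = 1 ∧
      u * p1 + v * s = p2 := by
    refine ⟨(s - p2) / (s - p1), (p2 - p1) / (s - p1), div_pos (by linarith) hd,
      div_pos (by linarith) hd, ?_, ?_⟩ <;> field_simp <;> ring
  have hc := hconc.2 h1 hs h1s.ne hu hv huv
  simp only [smul_eq_mul] at hc
  have hq : 0 < q p1 - q s := sub_pos.2 (hanti h1 hs h1s)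
  have hm2 : 0 < a * (u * p1 + v * s) - c := by nlinarith [mul_pos ha (sub_pos.2 h12)]
  have hlow := mul_lt_mul_of_pos_left hc hm2
  have hcross : 0 < u * v * (a * (s - p1)) * (q p1 - q s) := by positivity
  obtain rfl : u = 1 - v := by linarith
  have hchord := mul_le_mul_of_nonneg_left hf hv.le
  have key : (a * ((1 - v) * p1 + v * s) - c) * ((1 - v) * q p1 + v * q s) =
      (1 - v) * ((a * p1 - c) * q p1) + v * ((a * s - c) * q s)
        + (1 - v) * v * (a * (s - p1)) * (q p1 - q s) := by ring
  linarith

theorem stmt_15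
    (q : ℝ → ℝ)
    (hq_diff : Differentiable ℝ q)
    (hq_diff2 : Differentiable ℝ (deriv q))
    (hq_conc : StrictConcaveOn ℝ (Set.Icc (0:ℝ) 1) q)
    (hq_anti : StrictAntiOn q (Set.Icc (0:ℝ) 1))
    (hq_nonneg : ∀ p ∈ Set.Icc (0:ℝ) 1, 0 ≤ q p)
    (hq_zero : q 0 = 1) (hq_one : q 1 = 0)
    (cr cs α : ℝ) (hcs0 : 0 < cs) (hcsr : cs < cr) (hcr1 : cr < 1)
    (hα : α ∈ Set.Ioo (0:ℝ) 1)
    (hαcs : α < 1 - cs)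
    (psstar : ℝ) (hps_mem : psstar ∈ Set.Icc (0:ℝ) 1)
    (hps_max : IsMaxOn (fun p => ((1 - α) * p - cs) * q p) (Set.Icc (0:ℝ) 1) psstar)
    (hps_uniq : ∀ p ∈ Set.Icc (0:ℝ) 1,
      IsMaxOn (fun p => ((1 - α) * p - cs) * q p) (Set.Icc (0:ℝ) 1) p → p = psstar)
    (β : ℝ) (hβ : β ∈ Set.Icc (0:ℝ) 1) :
    (∀ ps ∈ Set.Ioo (0:ℝ) (cs / (1 - α)), SelDom q cs α β ps 1) ∧
    (∀ ps ∈ Set.Ioc psstar 1, SelDom q cs α β ps psstar) ∧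
    (∀ p1 p2 : ℝ, cs / (1 - α) < p1 → p1 < p2 → p2 < psstar →
      ¬ SelDom q cs α β p1 p2 ∧ ¬ SelDom q cs α β p2 p1) := by
  have ha : 0 < 1 - α := by linarith [hα.2]
  have hind : cs / (1 - α) < 1 := by rw [div_lt_one ha]; linarith
  have hind0 : 0 < cs / (1 - α) := div_pos hcs0 ha
  have hqpos : ∀ p, 0 ≤ p → p < 1 → 0 < q p := fun p h0 h1 => by
    have := hq_anti ⟨h0, h1.le⟩ ⟨zero_le_one, le_rfl⟩ h1
    rwa [hq_one] at this
  have hmpos : ∀ p, cs / (1 - α) < p → 0 < (1 - α) * p - cs := fun p hp => by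
    rw [div_lt_iff₀ ha] at hp; linarith
  have hfpos : ∀ p, cs / (1 - α) < p → p < 1 → 0 < ((1 - α) * p - cs) * q p :=
    fun p hp hp1 => mul_pos (hmpos p hp) (hqpos p (hind0.trans hp).le hp1)
  have hmax : ∀ p ∈ Set.Icc (0:ℝ) 1,
      ((1 - α) * p - cs) * q p ≤ ((1 - α) * psstar - cs) * q psstar := fun p hp => hps_max hp
  have hstar : 0 < ((1 - α) * psstar - cs) * q psstar := by
    obtain ⟨m, hm, hm1⟩ := exists_between hind
    exact (hfpos m hm hm1).trans_le (hmax m ⟨(hind0.trans hm).le, hm1.le⟩)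
  have hstar_ind : cs / (1 - α) < psstar := by
    have := pos_of_mul_pos_left hstar (hq_nonneg _ hps_mem)
    rw [div_lt_iff₀ ha]; linarith
  have hβ1 : 0 ≤ 1 - β := by linarith [hβ.2]
  refine ⟨?_, ?_, ?_⟩
  · rintro ps ⟨h0, hps⟩
    have hps1 : ps < 1 := hps.trans hind
    have hneg : ((1 - α) * ps - cs) * q ps < 0 := by
      refine mul_neg_of_neg_of_pos ?_ (hqpos ps h0.le hps1)
      rw [lt_div_iff₀ ha] at hps; linarith
    have hone : ∀ pr ∈ Set.Ioc (0:ℝ) 1, selPay q cs α β pr 1 = 0 := fun pr _ => by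
      simp [selPay, hq_one]
    refine ⟨fun pr hpr => ?_, 1, ⟨one_pos, le_rfl⟩, ?_⟩
    · rw [hone pr hpr]
      unfold selPay
      split_ifs
      · exact hneg.le
      · exact mul_nonpos_of_nonneg_of_nonpos hβ1 hneg.le
      · exact le_rfl
    · rw [hone 1 ⟨one_pos, le_rfl⟩]
      simpa [selPay, hps1] using hneg
  · rintro ps ⟨hlt, hps1⟩
    have hps0 : 0 < ps := hind0.trans (hstar_ind.trans hlt)
    have hle := hmax ps ⟨hps0.le, hps1⟩
    have hnn : 0 ≤ ((1 - α) * ps - cs) * q ps :=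
      mul_nonneg (hmpos ps (hstar_ind.trans hlt)).le (hq_nonneg ps ⟨hps0.le, hps1⟩)
    refine ⟨fun pr hpr => ?_, ?_⟩
    · rcases lt_trichotomy ps pr with h | rfl | h
      · simpa [selPay, h, hlt.trans h] using hle
      · simp only [selPay, lt_irrefl, if_false, if_true, hlt]
        nlinarith [mul_nonneg hβ.1 hnn]
      · have : selPay q cs α β pr ps = 0 := by simp [selPay, h.not_gt, h.ne']
        rw [this]
        unfold selPay
        split_ifs
        · exact hstar.le
        · exact mul_nonneg hβ1 hstar.le
        · exact le_rfl
    · obtain ⟨m, hm, hm1⟩ := exists_between hlt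
      refine ⟨m, ⟨hind0.trans (hstar_ind.trans hm), hm1.le.trans hps1⟩, ?_⟩
      simpa [selPay, hm, hm1.not_gt, hm1.ne'] using hstar
  · intro p1 p2 h1 h12 h2
    have hs1 : psstar ≤ 1 := hps_mem.2
    have hp2 : p2 < 1 := h2.trans_le hs1
    have hp1 : p1 < 1 := h12.trans hp2
    have h1mem : p1 ∈ Set.Icc (0:ℝ) 1 := ⟨(hind0.trans h1).le, hp1.le⟩
    constructor
    · intro hdom
      obtain ⟨m, hm, hm1⟩ := exists_between h12
      have := hdom.1 m ⟨hind0.trans (h1.trans hm), (hm1.trans hp2).le⟩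
      simp only [selPay, hm, hm1.not_gt, hm1.ne', if_true, if_false] at this
      exact (hfpos p1 h1 hp1).not_ge this
    · intro hdom
      have := hdom.1 1 ⟨one_pos, le_rfl⟩
      simp only [selPay, hp1, hp2, if_true] at this
      exact (profit_lt_of_lt_max hq_conc hq_anti ha h1mem hps_mem (hmpos p1 h1).le h12 h2
        (hmax p1 h1mem)).not_ge this
end
end

section
/- Assume α < 1 − c_r, and let m = min{p_rind, p_r*} and M = max{p_rind, p_r*}, where p_r* is the unique maximizer of π_rr over [0,1] and p_rind = c_r/(1−α). In the staying subgame with any tie-splitting parameter β ∈ [0,1], the retailer price m weakly dominates every retailer price p_r ∈ (0, m), and the retailer price M weakly dominates every retailer price p_r ∈ (M, 1]. Here a retailer price r is weakly dominated by r' if for every seller price p_s ∈ (0,1] the retailer's payoff under (r', p_s) is at least its payoff under (r, p_s), with strict inequality for at least one seller price. -/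
/-! Write `f p = (p - cr) * q p` for the retailer's own-sale profit and `g p = α * p * q p` for its
referral income. Two facts drive the proof.

* `f` is single-peaked at `prstar`: it is strictly increasing on `[0, prstar]`
  (`ownProfit_lt_of_le_peak`) and strictly decreasing on `[max cr prstar, 1]`
  (`ownProfit_lt_of_peak_le`). Both come from the strict concavity of `f` on `[cr, 1]`
  (`ownProfit_strictConcaveOn`); below `cr`, where `f` need not be concave, it is negative and
  increasing.
* `f p - g p = ((1 - α) * p - cr) * q p`, so `f ≤ g` below the indifference price and `g ≤ f` above.

For `r < m`, raising the price to `m` changes the outcome only if the seller's price is at least `r`: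
the retailer then gets the referral income on a sale at a price at most `p_rind`, or a larger own
profit, or a mixture of the two. The case `r > M` is the mirror image. In both cases the inequality is
strict when the seller charges the larger of the two retailer prices. -/

/-- The product of the increasing affine margin `p - c` and the decreasing strictly concave demand
is strictly concave where the margin is nonnegative. -/
lemma ownProfit_strictConcaveOn {q : ℝ → ℝ} {c : ℝ} (hc : 0 < c)
    (hconc : StrictConcaveOn ℝ (Set.Icc (0:ℝ) 1) q)
    (hanti : StrictAntiOn q (Set.Icc (0:ℝ) 1)) :
    StrictConcaveOn ℝ (Set.Icc c 1) (fun p => (p - c) * q p) := by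
  refine LinearOrder.strictConcaveOn_of_lt (convex_Icc c 1) ?_
  intro x hx y hy hxy a b ha hb hab
  have hx0 : x ∈ Set.Icc (0:ℝ) 1 := ⟨hc.le.trans hx.1, hx.2⟩
  have hy0 : y ∈ Set.Icc (0:ℝ) 1 := ⟨hc.le.trans hy.1, hy.2⟩
  have hq := hconc.2 hx0 hy0 hxy.ne ha hb hab
  have hd : q y < q x := hanti hx0 hy0 hxy
  simp only [smul_eq_mul] at hq ⊢
  have hz : a * x + b * y - c = a * (x - c) + b * (y - c) := by
    linear_combination c * hab
  have hzpos : 0 < a * x + b * y - c := by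
    rw [hz]
    have h1 := mul_nonneg ha.le (sub_nonneg.2 hx.1)
    have h2 := mul_pos hb (sub_pos.2 (lt_of_le_of_lt hx.1 hxy))
    linarith
  have h1 := mul_lt_mul_of_pos_left hq hzpos
  -- The gain from multiplying averages of two oppositely ordered pairs.
  have h2 : (a * x + b * y - c) * (a * q x + b * q y)
      = a * ((x - c) * q x) + b * ((y - c) * q y) + a * b * ((y - x) * (q x - q y)) := by
    obtain rfl : b = 1 - a := by linarith
    ring
  have h3 : 0 < a * b * ((y - x) * (q x - q y)) :=
    mul_pos (mul_pos ha hb) (mul_pos (sub_pos.2 hxy) (sub_pos.2 hd))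
  linarith

lemma ownProfit_lt_of_le_peak {q : ℝ → ℝ} {c s : ℝ} (hc : 0 < c)
    (hconc : StrictConcaveOn ℝ (Set.Icc (0:ℝ) 1) q)
    (hanti : StrictAntiOn q (Set.Icc (0:ℝ) 1))
    (hnonneg : ∀ p ∈ Set.Icc (0:ℝ) 1, 0 ≤ q p)
    (hs : s ∈ Set.Icc (0:ℝ) 1)
    (hmax : IsMaxOn (fun p => (p - c) * q p) (Set.Icc (0:ℝ) 1) s)
    (huniq : ∀ p ∈ Set.Icc (0:ℝ) 1,
      IsMaxOn (fun p => (p - c) * q p) (Set.Icc (0:ℝ) 1) p → p = s)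
    {x y : ℝ} (hx : 0 ≤ x) (hxy : x < y) (hys : y ≤ s) :
    (x - c) * q x < (y - c) * q y := by
  have hx0 : x ∈ Set.Icc (0:ℝ) 1 := ⟨hx, by linarith [hs.2]⟩
  have hy0 : y ∈ Set.Icc (0:ℝ) 1 := ⟨by linarith, by linarith [hs.2]⟩
  have hd : q y < q x := hanti hx0 hy0 hxy
  have hqy := hnonneg y hy0
  rcases lt_or_ge x c with hxc | hxc
  · have h1 := mul_pos (sub_pos.2 hxc) (sub_pos.2 hd)
    have h2 := mul_nonneg (sub_pos.2 hxy).le hqy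
    nlinarith
  · rcases hys.eq_or_lt with rfl | hys
    · by_contra! h
      exact hxy.ne (huniq x hx0 fun p hp => (hmax hp).trans h)
    · have h := (ownProfit_strictConcaveOn hc hconc hanti).lt_on_openSegment
        (x := x) (y := s) (z := y) ⟨hxc, hx0.2⟩ ⟨by linarith, hs.2⟩ (by linarith)
        (by rw [openSegment_eq_Ioo (by linarith)]; exact ⟨hxy, hys⟩)
      rwa [min_eq_left (hmax hx0)] at h

lemma ownProfit_lt_of_peak_le {q : ℝ → ℝ} {c s : ℝ} (hc : 0 < c) (hc1 : c < 1)
    (hconc : StrictConcaveOn ℝ (Set.Icc (0:ℝ) 1) q)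
    (hanti : StrictAntiOn q (Set.Icc (0:ℝ) 1))
    (hone : q 1 = 0)
    (hs : s ∈ Set.Icc (0:ℝ) 1)
    (hmax : IsMaxOn (fun p => (p - c) * q p) (Set.Icc (0:ℝ) 1) s)
    (huniq : ∀ p ∈ Set.Icc (0:ℝ) 1,
      IsMaxOn (fun p => (p - c) * q p) (Set.Icc (0:ℝ) 1) p → p = s)
    {x y : ℝ} (hcx : c ≤ x) (hsx : s ≤ x) (hxy : x < y) (hy : y ≤ 1) :
    (y - c) * q y < (x - c) * q x := by
  have hx0 : x ∈ Set.Icc (0:ℝ) 1 := ⟨by linarith, by linarith⟩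
  have hy0 : y ∈ Set.Icc (0:ℝ) 1 := ⟨by linarith, hy⟩
  -- The peak is not below cost: the profit there is at least the profit `0` at price `1`.
  have hcs : c ≤ s := by
    by_contra! h
    have h1 : (1 - c) * q 1 ≤ (s - c) * q s := hmax (Set.right_mem_Icc.2 zero_le_one)
    have h2 : q 1 < q s := hanti hs (Set.right_mem_Icc.2 zero_le_one) (by linarith)
    rw [hone] at h1 h2
    nlinarith [mul_pos (sub_pos.2 h) h2]
  rcases hsx.eq_or_lt with rfl | hsx
  · by_contra! h
    exact hxy.ne' (huniq y hy0 fun p hp => (hmax hp).trans h)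
  · have h := (ownProfit_strictConcaveOn hc hconc hanti).lt_on_openSegment
      (x := s) (y := y) (z := x) ⟨hcs, hs.2⟩ ⟨by linarith, hy⟩ (by linarith)
      (by rw [openSegment_eq_Ioo (by linarith)]; exact ⟨hsx, hxy⟩)
    rwa [min_eq_right (hmax hy0)] at h


noncomputable section

/-- Retailer price `r` is weakly dominated by retailer price `r'`. -/
def RetDom (q : ℝ → ℝ) (cr α β : ℝ) (r r' : ℝ) : Prop :=
  (∀ ps ∈ Set.Ioc (0:ℝ) 1, retPay q cr α β r ps ≤ retPay q cr α β r' ps) ∧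
  (∃ ps ∈ Set.Ioc (0:ℝ) 1, retPay q cr α β r ps < retPay q cr α β r' ps)

theorem stmt_16
    (q : ℝ → ℝ)
    (hq_diff : Differentiable ℝ q)
    (hq_diff2 : Differentiable ℝ (deriv q))
    (hq_conc : StrictConcaveOn ℝ (Set.Icc (0:ℝ) 1) q)
    (hq_anti : StrictAntiOn q (Set.Icc (0:ℝ) 1))
    (hq_nonneg : ∀ p ∈ Set.Icc (0:ℝ) 1, 0 ≤ q p)
    (hq_zero : q 0 = 1) (hq_one : q 1 = 0)
    (cr cs α : ℝ) (hcs0 : 0 < cs) (hcsr : cs < cr) (hcr1 : cr < 1)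
    (hα : α ∈ Set.Ioo (0:ℝ) 1)
    (hαcr : α < 1 - cr)
    (prstar : ℝ) (hpr_mem : prstar ∈ Set.Icc (0:ℝ) 1)
    (hpr_max : IsMaxOn (fun p => (p - cr) * q p) (Set.Icc (0:ℝ) 1) prstar)
    (hpr_uniq : ∀ p ∈ Set.Icc (0:ℝ) 1,
      IsMaxOn (fun p => (p - cr) * q p) (Set.Icc (0:ℝ) 1) p → p = prstar)
    (β : ℝ) (hβ : β ∈ Set.Icc (0:ℝ) 1) :
    (∀ pr ∈ Set.Ioo (0:ℝ) (min (cr / (1 - α)) prstar),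
      RetDom q cr α β pr (min (cr / (1 - α)) prstar)) ∧
    (∀ pr ∈ Set.Ioc (max (cr / (1 - α)) prstar) 1,
      RetDom q cr α β pr (max (cr / (1 - α)) prstar)) := by
  obtain ⟨hα0, hα1⟩ := hα
  obtain ⟨hβ0, hβ1⟩ := hβ
  have hcr0 : 0 < cr := hcs0.trans hcsr
  have hα' : 0 < 1 - α := sub_pos.2 hα1
  have hP1 : cr / (1 - α) < 1 := by rw [div_lt_one hα']; linarith
  have hPcr : cr < cr / (1 - α) := by
    rw [lt_div_iff₀ hα']; nlinarith [mul_pos hcr0 hα0]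
  have up : ∀ {x y : ℝ}, 0 ≤ x → x < y → y ≤ prstar → (x - cr) * q x < (y - cr) * q y :=
    ownProfit_lt_of_le_peak hcr0 hq_conc hq_anti hq_nonneg hpr_mem hpr_max hpr_uniq
  have down : ∀ {x y : ℝ}, cr ≤ x → prstar ≤ x → x < y → y ≤ 1 →
      (y - cr) * q y < (x - cr) * q x :=
    ownProfit_lt_of_peak_le hcr0 hcr1 hq_conc hq_anti hq_one hpr_mem hpr_max hpr_uniq
  have f_le_g : ∀ {p : ℝ}, 0 ≤ p → p ≤ cr / (1 - α) → (p - cr) * q p ≤ α * p * q p := by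
    intro p hp hpP
    have h := (le_div_iff₀ hα').1 hpP
    exact mul_le_mul_of_nonneg_right (by linarith) (hq_nonneg p ⟨hp, by linarith⟩)
  have g_le_f : ∀ {p : ℝ}, cr / (1 - α) ≤ p → p ≤ 1 → α * p * q p ≤ (p - cr) * q p := by
    intro p hpP hp
    have h := (div_le_iff₀ hα').1 hpP
    exact mul_le_mul_of_nonneg_right (by linarith) (hq_nonneg p ⟨by linarith, hp⟩)
  -- A `β`-mixture of two numbers lies between them.
  have mix_ge : ∀ {u v w : ℝ}, w ≤ u → w ≤ v → w ≤ β * u + (1 - β) * v := by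
    intro u v w hu hv
    nlinarith [mul_nonneg hβ0 (sub_nonneg.2 hu), mul_nonneg (sub_nonneg.2 hβ1) (sub_nonneg.2 hv)]
  have mix_le : ∀ {u v w : ℝ}, u ≤ w → v ≤ w → β * u + (1 - β) * v ≤ w := by
    intro u v w hu hv
    nlinarith [mul_nonneg hβ0 (sub_nonneg.2 hu), mul_nonneg (sub_nonneg.2 hβ1) (sub_nonneg.2 hv)]
  constructor
  · have hmP := min_le_left (cr / (1 - α)) prstar
    have hms := min_le_right (cr / (1 - α)) prstar
    generalize min (cr / (1 - α)) prstar = m at hmP hms ⊢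
    rintro r ⟨hr0, hrm⟩
    have hfm := up hr0.le hrm hms
    have hgm := f_le_g (hr0.le.trans hrm.le) hmP
    constructor
    · rintro ps ⟨hp0, hp1⟩
      unfold retPay
      rcases lt_trichotomy ps r with h | rfl | h
      · simp only [h.not_gt, h.ne', (h.trans hrm).not_gt, (h.trans hrm).ne', if_false, le_refl]
      · simp only [lt_irrefl, hrm.not_gt, hrm.ne', if_false, if_true]
        exact mix_le (f_le_g hr0.le (by linarith)) le_rfl
      · rw [if_pos h]
        rcases lt_trichotomy ps m with h' | rfl | h'
        · simp only [h'.not_gt, h'.ne', if_false]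
          exact (up hr0.le h (by linarith)).le.trans (f_le_g hp0.le (by linarith))
        · simp only [lt_irrefl, if_false, if_true]
          exact mix_ge hfm.le (hfm.le.trans hgm)
        · simp only [h', if_true]
          exact hfm.le
    · refine ⟨m, ⟨by linarith, by linarith⟩, ?_⟩
      simp only [retPay, hrm, lt_irrefl, if_false, if_true]
      exact hfm.trans_le (mix_ge le_rfl hgm)
  · have hMP := le_max_left (cr / (1 - α)) prstar
    have hMs := le_max_right (cr / (1 - α)) prstar
    generalize max (cr / (1 - α)) prstar = M at hMP hMs ⊢
    rintro r ⟨hMr, hr1⟩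
    have hfM := down (by linarith) hMs hMr hr1
    have hgr := g_le_f (hMP.trans hMr.le) hr1
    constructor
    · rintro ps ⟨hp0, hp1⟩
      unfold retPay
      rcases lt_trichotomy ps M with h | rfl | h
      · simp only [h.not_gt, h.ne', (h.trans hMr).not_gt, (h.trans hMr).ne', if_false, le_refl]
      · simp only [lt_irrefl, hMr.not_gt, hMr.ne', if_false, if_true]
        exact mix_ge (g_le_f hMP hp1) le_rfl
      · rw [if_pos (c := M < ps) h]
        rcases lt_trichotomy ps r with h' | rfl | h'
        · simp only [h'.not_gt, h'.ne', if_false]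
          exact (g_le_f (by linarith) hp1).trans (down (by linarith) hMs h hp1).le
        · simp only [lt_irrefl, if_false, if_true]
          exact mix_le hfM.le (hgr.trans hfM.le)
        · simp only [h', if_true]
          exact hfM.le
    · refine ⟨r, ⟨by linarith, hr1⟩, ?_⟩
      simp only [retPay, hMr, lt_irrefl, if_false, if_true]
      exact (mix_le le_rfl hgr).trans_lt hfM
end
end

section
/- Suppose c_s ≤ c_r²/p_r*, where p_r* is the unique maximizer of π_rr over [0,1], and set α₀ = 1 − c_r/p_r* (so α₀ ∈ (0,1) and α₀ < 1 − c_s). Let p_s*(α₀) be the unique maximizer over [0,1] of p ↦ ((1−α₀)·p − c_s)·q(p). Then α₀·p_s*(α₀)·q(p_s*(α₀)) ≥ (p_r* − c_r)·q(p_r*); that is, at the fee α₀ the retailer's referral payoff when the seller sells at its optimal price is at least the retailer's optimal single-agent payoff. -/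
/-!
Write `r = prstar`, `s = psstar` and `b = cr / r = 1 - α₀`. The proof is a revealed-preference
argument. Since `r - cr = (1 - b) r`, the claim is `s q(s) ≥ r q(r)`. Comparing `r` and `s` in both
maximization problems and adding gives `(b cr - cs) (q(s) - q(r)) ≥ 0`, and `b cr - cs ≥ 0` is the
smallness assumption on `cs`; so `q(s) ≥ q(r)` (when `b cr = cs` the two objectives are proportional
and uniqueness of the maximizer gives `s = r`). The seller's optimality
`b s q(s) ≥ b r q(r) + cs (q(s) - q(r))` then finishes the proof.
-/

noncomputable section

theorem stmt_17
    (q : ℝ → ℝ)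
    (hq_diff : Differentiable ℝ q)
    (hq_diff2 : Differentiable ℝ (deriv q))
    (hq_conc : StrictConcaveOn ℝ (Set.Icc (0:ℝ) 1) q)
    (hq_anti : StrictAntiOn q (Set.Icc (0:ℝ) 1))
    (hq_nonneg : ∀ p ∈ Set.Icc (0:ℝ) 1, 0 ≤ q p)
    (hq_zero : q 0 = 1) (hq_one : q 1 = 0)
    (cr cs : ℝ) (hcs0 : 0 < cs) (hcsr : cs < cr) (hcr1 : cr < 1)
    (prstar : ℝ) (hpr_mem : prstar ∈ Set.Icc (0:ℝ) 1)
    (hpr_max : IsMaxOn (fun p => (p - cr) * q p) (Set.Icc (0:ℝ) 1) prstar)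
    (hpr_uniq : ∀ p ∈ Set.Icc (0:ℝ) 1,
      IsMaxOn (fun p => (p - cr) * q p) (Set.Icc (0:ℝ) 1) p → p = prstar)
    (hcs_small : cs ≤ cr ^ 2 / prstar)
    (psstar : ℝ) (hps_mem : psstar ∈ Set.Icc (0:ℝ) 1)
    (hps_max : IsMaxOn
      (fun p => ((1 - (1 - cr / prstar)) * p - cs) * q p) (Set.Icc (0:ℝ) 1) psstar)
    (hps_uniq : ∀ p ∈ Set.Icc (0:ℝ) 1,
      IsMaxOn (fun p => ((1 - (1 - cr / prstar)) * p - cs) * q p)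
        (Set.Icc (0:ℝ) 1) p → p = psstar) :
    (0 < 1 - cr / prstar ∧ 1 - cr / prstar < 1) ∧
    1 - cr / prstar < 1 - cs ∧
    (1 - cr / prstar) * psstar * q psstar ≥ (prstar - cr) * q prstar := by
  have hcr0 : 0 < cr := hcs0.trans hcsr
  have h01 : (1:ℝ) ∈ Set.Icc (0:ℝ) 1 := ⟨zero_le_one, le_rfl⟩
  -- The price midway between `cr` and `1` earns a positive profit, hence so does `prstar`.
  have hr : cr < prstar := by
    have hm : (1 + cr) / 2 ∈ Set.Icc (0:ℝ) 1 := ⟨by linarith, by linarith⟩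
    have hqm : q 1 < q ((1 + cr) / 2) := hq_anti hm h01 (by linarith)
    have hle : ((1 + cr) / 2 - cr) * q ((1 + cr) / 2) ≤ (prstar - cr) * q prstar := hpr_max hm
    have hpos : 0 < ((1 + cr) / 2 - cr) * q ((1 + cr) / 2) :=
      mul_pos (by linarith) (by linarith)
    have := pos_of_mul_pos_left (hpos.trans_le hle) (hq_nonneg prstar hpr_mem)
    linarith
  have hr0 : 0 < prstar := hcr0.trans hr
  obtain ⟨b, hb⟩ : ∃ b, b = cr / prstar := ⟨_, rfl⟩
  have hbr : b * prstar = cr := by rw [hb]; field_simp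
  have hbc : cr ^ 2 / prstar = b * cr := by rw [hb]; ring
  rw [hbc] at hcs_small
  rw [← hb] at hps_max ⊢
  have hb0 : 0 < b := hb ▸ div_pos hcr0 hr0
  have hb1 : b < 1 := hb ▸ (div_lt_one hr0).2 hr
  have hcrb : cr ≤ b := by nlinarith [hpr_mem.2]
  refine ⟨⟨by linarith, by linarith⟩, by linarith, ?_⟩
  have h1 : ((1 - (1 - b)) * prstar - cs) * q prstar ≤ ((1 - (1 - b)) * psstar - cs) * q psstar :=
    hps_max hpr_mem
  have h2 : (psstar - cr) * q psstar ≤ (prstar - cr) * q prstar := hpr_max hps_mem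
  have hqle : q prstar ≤ q psstar := by
    rcases hcs_small.lt_or_eq with hlt | heq
    · nlinarith [mul_le_mul_of_nonneg_left h2 hb0.le]
    · have hs : psstar = prstar := by
        refine hpr_uniq psstar hps_mem fun p hp => ?_
        have h3 : ((1 - (1 - b)) * p - cs) * q p ≤ ((1 - (1 - b)) * psstar - cs) * q psstar :=
          hps_max hp
        rw [heq] at h3
        refine le_of_mul_le_mul_left (a := b) ?_ hb0
        linarith
      rw [hs]
  have hrev : prstar * q prstar ≤ psstar * q psstar := by
    refine le_of_mul_le_mul_left (a := b) ?_ hb0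
    nlinarith [mul_nonneg hcs0.le (sub_nonneg.2 hqle)]
  have hmarg : prstar - cr = (1 - b) * prstar := by linarith
  rw [hmarg, mul_assoc, mul_assoc]
  exact mul_le_mul_of_nonneg_left hrev (by linarith)
end
end

section
/- Define g(α) = α·(c_s/(1−α))·q(c_s/(1−α)) for α ∈ [1 − c_s/p_r*, 1 − c_s), where p_r* is the unique maximizer of π_rr over [0,1]. Then g(α) = (c_s/(1−α) − c_s)·q(c_s/(1−α)) for all such α, and g is strictly decreasing on the interval [1 − c_s/p_r*, 1 − c_s); that is, the retailer's referral payoff when the seller sells at its breakeven price p_sind(α) = c_s/(1−α) is strictly decreasing in the fee on this interval. -/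
/-!
Substitute `p = cs / (1 - a)`, an increasing function of the fee `a` that sends the interval
into `[prstar, 1)`. Since `a * p = p - cs`, the payoff becomes
`(p - cs) * q p = (p - cr) * q p + (cr - cs) * q p`. The second summand is strictly decreasing.
The first is, on `[cr, 1]`, a product of nonnegative concave functions, one increasing and one
decreasing, so it is concave; a concave function is antitone to the right of its maximizer,
and `prstar > cr` because the maximal value is positive.
-/

noncomputable section

theorem stmt_18
    (q : ℝ → ℝ)
    (hq_diff : Differentiable ℝ q)
    (hq_diff2 : Differentiable ℝ (deriv q))
    (hq_conc : StrictConcaveOn ℝ (Set.Icc (0:ℝ) 1) q)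
    (hq_anti : StrictAntiOn q (Set.Icc (0:ℝ) 1))
    (hq_nonneg : ∀ p ∈ Set.Icc (0:ℝ) 1, 0 ≤ q p)
    (hq_zero : q 0 = 1) (hq_one : q 1 = 0)
    (cr cs : ℝ) (hcs0 : 0 < cs) (hcsr : cs < cr) (hcr1 : cr < 1)
    (prstar : ℝ) (hpr_mem : prstar ∈ Set.Icc (0:ℝ) 1)
    (hpr_max : IsMaxOn (fun p => (p - cr) * q p) (Set.Icc (0:ℝ) 1) prstar)
    (hpr_uniq : ∀ p ∈ Set.Icc (0:ℝ) 1,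
      IsMaxOn (fun p => (p - cr) * q p) (Set.Icc (0:ℝ) 1) p → p = prstar) :
    (∀ a ∈ Set.Ico (1 - cs / prstar) (1 - cs),
      a * (cs / (1 - a)) * q (cs / (1 - a)) =
        (cs / (1 - a) - cs) * q (cs / (1 - a))) ∧
    StrictAntiOn (fun a => a * (cs / (1 - a)) * q (cs / (1 - a)))
      (Set.Ico (1 - cs / prstar) (1 - cs)) := by
  have hq1 : ∀ p ∈ Set.Ico (0:ℝ) 1, 0 < q p := fun p hp => by
    have := hq_anti ⟨hp.1, hp.2.le⟩ (Set.right_mem_Icc.2 zero_le_one) hp.2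
    rwa [hq_one] at this
  -- The maximal value is at least the positive value at the midpoint of `[cr, 1]`.
  have hpr : cr < prstar := by
    have hmid : ((cr + 1) / 2 - cr) * q ((cr + 1) / 2) ≤ (prstar - cr) * q prstar :=
      hpr_max (show (cr + 1) / 2 ∈ Set.Icc (0:ℝ) 1 from ⟨by linarith, by linarith⟩)
    have hpos : 0 < ((cr + 1) / 2 - cr) * q ((cr + 1) / 2) :=
      mul_pos (by linarith) (hq1 _ ⟨by linarith, by linarith⟩)
    have := pos_of_mul_pos_left (hpos.trans_le hmid) (hq_nonneg _ hpr_mem)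
    linarith
  have hsub : Set.Icc cr 1 ⊆ Set.Icc (0:ℝ) 1 := Set.Icc_subset_Icc_left (by linarith)
  have hconc : ConcaveOn ℝ (Set.Icc cr 1) (fun p => (p - cr) * q p) := by
    have hlin : ConcaveOn ℝ (Set.Icc cr 1) (fun p : ℝ => p - cr) :=
      (concaveOn_id (convex_Icc _ _)).sub (convexOn_const cr (convex_Icc _ _))
    refine hlin.mul (hq_conc.concaveOn.subset hsub (convex_Icc _ _))
      (fun p hp => sub_nonneg.2 hp.1) (fun p hp => hq_nonneg p (hsub hp)) ?_
    exact MonotoneOn.antivaryOn (fun x _ y _ hxy => sub_le_sub_right hxy cr)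
      (hq_anti.antitoneOn.mono hsub)
  have hanti : ∀ x y, prstar ≤ x → x ≤ y → y ≤ 1 →
      (y - cr) * q y ≤ (x - cr) * q x := fun x y hx hxy hy => by
    have hmin := hconc.ge_on_segment (x := prstar) (y := y) (z := x)
      ⟨hpr.le, hpr_mem.2⟩ ⟨by linarith, hy⟩
      (by rw [segment_eq_Icc (hx.trans hxy)]; exact ⟨hx, hxy⟩)
    have hmax : (y - cr) * q y ≤ (prstar - cr) * q prstar :=
      hpr_max (show y ∈ Set.Icc (0:ℝ) 1 from ⟨by linarith, hy⟩)
    exact (le_min hmax le_rfl).trans hmin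
  have heq : ∀ a ∈ Set.Ico (1 - cs / prstar) (1 - cs),
      a * (cs / (1 - a)) * q (cs / (1 - a)) =
        (cs / (1 - a) - cs) * q (cs / (1 - a)) := fun a ha => by
    have h : 1 - a ≠ 0 := by linarith [ha.2]
    congr 1
    field_simp
    ring
  refine ⟨heq, fun a ha b hb hab => ?_⟩
  have hb0 : 0 < 1 - b := by linarith [hb.2]
  have hx : prstar ≤ cs / (1 - a) := by
    rw [le_div_comm₀ (by linarith) (by linarith)]
    linarith [ha.1]
  have hxy : cs / (1 - a) < cs / (1 - b) :=
    div_lt_div_of_pos_left hcs0 hb0 (by linarith)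
  have hy : cs / (1 - b) ≤ 1 := (div_le_one hb0).2 (by linarith [hb.2])
  have hq := hq_anti (a := cs / (1 - a)) (b := cs / (1 - b))
    ⟨by linarith, by linarith⟩ ⟨by linarith, hy⟩ hxy
  have hf := hanti _ _ hx hxy.le hy
  have hg := mul_lt_mul_of_pos_left hq (sub_pos.2 hcsr)
  simp only [heq a ha, heq b hb]
  linarith
end
end

section
/- There exists a unique fee α†_s in the open interval (1 − c_s/p_r*, 1 − c_s) such that α†_s·(c_s/(1−α†_s))·q(c_s/(1−α†_s)) = (p_r* − c_r)·q(p_r*), where p_r* is the unique maximizer of π_rr over [0,1]; that is, the fee at which the retailer's referral payoff at the seller's breakeven price equals the retailer's optimal single-agent payoff is well-defined and strictly exceeds 1 − c_s/p_r*. -/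
/-!
Substituting `p = cs / (1 - a)`, i.e. `a = 1 - cs / p`, turns the equation into
`(p - cs) * q p = V` with `V = (prstar - cr) * q prstar`, to be solved for `p ∈ (prstar, 1)`.
Since `V > 0` (the payoff is positive at any price in `(cr, 1)`), we have `cr < prstar < 1` and
`0 < q prstar`; hence `(p - cs) * q p` exceeds `V` at `prstar` because `cs < cr`, and it vanishes
at `1`, so the intermediate value theorem gives a solution. For uniqueness, `(p - cs) * q p` is
the product of an increasing affine function and a decreasing concave one, so it is strictly
quasiconcave (`product_gt`): starting above `V` at `prstar`, it cannot take the value `V` at two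
points to the right of `prstar`.
-/

/-- If `x < y < z` and `(p - c) * q p` is above `V` at `x` and equal to `V` at `z`, then it is
above `V` at `y`. -/
lemma product_gt {q : ℝ → ℝ} (hq_conc : StrictConcaveOn ℝ (Set.Icc (0:ℝ) 1) q)
    (hq_anti : StrictAntiOn q (Set.Icc (0:ℝ) 1)) {c V x y z : ℝ}
    (hx : x ∈ Set.Icc (0:ℝ) 1) (hz : z ∈ Set.Icc (0:ℝ) 1) (hcx : c < x) (hxy : x < y)
    (hyz : y < z) (hVx : V < (x - c) * q x) (hVz : (z - c) * q z = V) :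
    V < (y - c) * q y := by
  have hxz : x < z := hxy.trans hyz
  obtain ⟨s, t, hs, ht, hst, hy⟩ : ∃ s t : ℝ, 0 < s ∧ 0 < t ∧ s + t = 1 ∧ s * x + t * z = y := by
    have hd : z - x ≠ 0 := by linarith
    refine ⟨(z - y) / (z - x), (y - x) / (z - x), div_pos (by linarith) (by linarith),
      div_pos (by linarith) (by linarith), ?_, ?_⟩
    · field_simp
      ring
    · field_simp
      ring
  have hc := hq_conc.2 hx hz hxz.ne hs ht hst
  simp only [smul_eq_mul, hy] at hc
  have hq := hq_anti hx hz hxz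
  have h1 : (y - c) * (s * q x + t * q z) < (y - c) * q y :=
    mul_lt_mul_of_pos_left hc (by linarith)
  -- The product of the two convex combinations exceeds the convex combination of the products,
  -- since `p - c` and `q` are oppositely ordered.
  have h2 : (y - c) * (s * q x + t * q z) = s * ((x - c) * q x) + t * ((z - c) * q z)
      + s * t * ((z - x) * (q x - q z)) := by
    obtain rfl : s = 1 - t := by linarith
    rw [← hy]
    ring
  have h3 : 0 < s * t * ((z - x) * (q x - q z)) :=
    mul_pos (mul_pos hs ht) (mul_pos (by linarith) (by linarith))
  have h4 : s * V < s * ((x - c) * q x) := mul_lt_mul_of_pos_left hVx hs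
  have h5 : s * V + t * V = V := by rw [← add_mul, hst, one_mul]
  rw [hVz] at h2
  linarith

theorem stmt_19
    (q : ℝ → ℝ)
    (hq_diff : Differentiable ℝ q)
    (hq_diff2 : Differentiable ℝ (deriv q))
    (hq_conc : StrictConcaveOn ℝ (Set.Icc (0:ℝ) 1) q)
    (hq_anti : StrictAntiOn q (Set.Icc (0:ℝ) 1))
    (hq_nonneg : ∀ p ∈ Set.Icc (0:ℝ) 1, 0 ≤ q p)
    (hq_zero : q 0 = 1) (hq_one : q 1 = 0)
    (cr cs : ℝ) (hcs0 : 0 < cs) (hcsr : cs < cr) (hcr1 : cr < 1)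
    (prstar : ℝ) (hpr_mem : prstar ∈ Set.Icc (0:ℝ) 1)
    (hpr_max : IsMaxOn (fun p => (p - cr) * q p) (Set.Icc (0:ℝ) 1) prstar)
    (hpr_uniq : ∀ p ∈ Set.Icc (0:ℝ) 1,
      IsMaxOn (fun p => (p - cr) * q p) (Set.Icc (0:ℝ) 1) p → p = prstar) :
    ∃! a : ℝ, a ∈ Set.Ioo (1 - cs / prstar) (1 - cs) ∧
      a * (cs / (1 - a)) * q (cs / (1 - a)) = (prstar - cr) * q prstar := by
  have hV : 0 < (prstar - cr) * q prstar := by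
    have hm : (cr + 1) / 2 ∈ Set.Icc (0:ℝ) 1 := ⟨by linarith, by linarith⟩
    have hqm : q 1 < q ((cr + 1) / 2) := hq_anti hm ⟨zero_le_one, le_rfl⟩ (by linarith)
    have hle : ((cr + 1) / 2 - cr) * q ((cr + 1) / 2) ≤ (prstar - cr) * q prstar := hpr_max hm
    exact lt_of_lt_of_le (mul_pos (by linarith) (by linarith)) hle
  have hq0 : 0 < q prstar :=
    lt_of_le_of_ne (hq_nonneg _ hpr_mem) fun h => by simp [← h] at hV
  have hcrp : cr < prstar := by linarith [pos_of_mul_pos_left hV hq0.le]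
  have hp1 : prstar < 1 :=
    lt_of_le_of_ne hpr_mem.2 fun h => by rw [h, hq_one] at hq0; exact hq0.false
  have hp0 : 0 < prstar := by linarith
  have hVp : (prstar - cr) * q prstar < (prstar - cs) * q prstar :=
    mul_lt_mul_of_pos_right (by linarith) hq0
  -- A fee in the interval corresponds to a breakeven price in `(prstar, 1)` solving the
  -- substituted equation.
  have key : ∀ a : ℝ, a ∈ Set.Ioo (1 - cs / prstar) (1 - cs) →
      a * (cs / (1 - a)) * q (cs / (1 - a)) = (prstar - cr) * q prstar →
      cs / (1 - a) ∈ Set.Ioo prstar 1 ∧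
        (cs / (1 - a) - cs) * q (cs / (1 - a)) = (prstar - cr) * q prstar := by
    rintro a ⟨ha1, ha2⟩ he
    have h1a : 0 < 1 - a := by linarith
    have hlt : 1 - a < cs / prstar := by linarith
    rw [lt_div_iff₀ hp0] at hlt
    refine ⟨⟨?_, ?_⟩, ?_⟩
    · rw [lt_div_iff₀ h1a]
      linarith
    · rw [div_lt_one h1a]
      linarith
    · rw [← he]
      congr 1
      field_simp
      ring
  obtain ⟨p, ⟨hp_gt, hp_lt⟩, hpV⟩ : ∃ p ∈ Set.Ioo prstar 1,
      (p - cs) * q p = (prstar - cr) * q prstar := by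
    have hcont : ContinuousOn (fun p => (p - cs) * q p) (Set.Icc prstar 1) :=
      ((continuous_id.sub continuous_const).mul hq_diff.continuous).continuousOn
    exact intermediate_value_Ioo' hp1.le hcont ⟨by simpa [hq_one] using hV, hVp⟩
  have hppos : 0 < p := by linarith
  have hinv : cs / (1 - (1 - cs / p)) = p := by
    rw [sub_sub_cancel, div_div_cancel₀ hcs0.ne']
  refine ⟨1 - cs / p, ⟨⟨?_, ?_⟩, ?_⟩, ?_⟩
  · linarith [div_lt_div_of_pos_left hcs0 hp0 hp_gt]
  · have : cs < cs / p := by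
      rw [lt_div_iff₀ hppos]
      nlinarith
    linarith
  · rw [hinv, ← hpV]
    congr 1
    field_simp
  · rintro b ⟨hb, hbe⟩
    obtain ⟨⟨hr_gt, hr_lt⟩, hrV⟩ := key b hb hbe
    have hb1 : 0 < 1 - b := by linarith [hb.2]
    have hrp : cs / (1 - b) = p := by
      rcases lt_trichotomy (cs / (1 - b)) p with h | h | h
      · exact absurd hrV (product_gt hq_conc hq_anti hpr_mem ⟨hppos.le, hp_lt.le⟩
          (hcsr.trans hcrp) hr_gt h hVp hpV).ne'
      · exact h
      · exact absurd hpV (product_gt hq_conc hq_anti hpr_mem ⟨by linarith, hr_lt.le⟩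
          (hcsr.trans hcrp) hp_gt h hVp hrV).ne'
    rw [← hrp, div_div_cancel₀ hcs0.ne']
    ring
end
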